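/- (Ribbon Pieri rule, elementary version.) Fix n ≥ 1, k ≥ 1, a partition λ, and N ≥ 1. Let e_k(A_q(x)) denote the elementary symmetric polynomial of degree k evaluated at the nN variables {q^{2j} x_i : 1 ≤ i ≤ N, 0 ≤ j ≤ n−1}. Then in ℤ[q][x_1,…,x_N] one has e_k(A_q(x)) · 𝒢_λ(x_1,…,x_N;q) = Σ_μ q^{s(μ/λ)} · 𝒢_μ(x_1,…,x_N;q), where the sum is over all partitions μ ⊇ λ such that μ/λ is a vertical n-ribbon strip with k ribbons, and s(μ/λ) is the spin of that strip. -/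

import Mathlib

/-!
The proof encodes a diagram `lam` by its boundary function `bd lam`, equivalently by its Maya
diagram: adding (removing) an `n`-ribbon moves one bead by `n` places to the right (left), see
`Hop`, and the spin of the ribbon is the number of beads jumped over (`IsRib.spin`).  Every ribbon
is thus determined by the position `p` of its tail, and gives rise to an adding operator
`up n q p` and a removing operator `dn n q p` on the free module on all diagrams.

* The ribbon of largest tail can always be peeled off a horizontal strip, and can be added back
  (`HT.peel`, `HT.add`).  Hence horizontal strips are exactly the matrix coefficients of the ordered
  product `∏ₚ (1 + x dₚ)`, and by conjugation vertical strips are those of `∏ₚ (1 + y uₚ)`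
  (`coefD`, `coefV`); in particular tilings are unique (`HT.unique`).
* The operators `uₚ` and `d_r` commute for `p ≠ r` (`up_dn_comm`).  At equal positions one has the
  exchange relation `(1 + x dₚ)(1 + y uₚ) Eₚ₊₁ = Eₚ (1 + y uₚ)(1 + x dₚ)` (`exchange`), in which
  `Eₚ` is diagonal and multiplies a diagram with `t` beads in the window `p, …, p + n - 1` by
  `∏_{j < t} (1 + q^(2j) x y)`.  Taking the product over all positions, the window is full on the far
  left and empty on the far right, so exchanging a vertical and a horizontal strip costs the
  factor `∏_{j < n} (1 + q^(2j) x y)` (`Dop_Vop`, `local_identity`).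
* The ribbon function is the product of `N` horizontal strip transfer matrices
  (`ribbonFn_eq_gg`).  Moving a vertical strip through all of them, by induction on `N`, produces
  `∏_{i, j} (1 + q^(2j) x_i y)`, the generating function of the `e_k(A_q(x))` (`ePoly_alphabet`).  For
  `N = 0` nothing but the empty strip is left, because no ribbon can be removed from a core.
  Comparing coefficients of `y ^ k` gives the Pieri rule (`pieri_gg`).
* Removals of different ribbons commute, so cores are unique (`core_unique`), and a diagram
  and its extension by a vertical strip have the same core (`nCore_vstrip`).
-/

open scoped Classical

noncomputable section

/-- A cell of a Young/skew diagram: (row, column). -/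
abbrev Cell : Type := ℕ × ℕ

/-- Two cells are adjacent if they share an edge. -/
def Adj (a b : Cell) : Prop :=
  (a.1 = b.1 ∧ (a.2 + 1 = b.2 ∨ b.2 + 1 = a.2)) ∨
  (a.2 = b.2 ∧ (a.1 + 1 = b.1 ∨ b.1 + 1 = a.1))

/-- Reachability inside a finite set of cells via edge-adjacency. -/
def Reach (S : Finset Cell) (a b : Cell) : Prop :=
  Relation.ReflTransGen (fun x y => y ∈ S ∧ Adj x y) a b

/-- A set of cells is connected if any two of its cells are joined by a path inside it. -/
def CellsConnected (S : Finset Cell) : Prop :=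
  ∀ a ∈ S, ∀ b ∈ S, Reach S a b

/-- The connected component of the cell `c` inside `S`. -/
def component (S : Finset Cell) (c : Cell) : Finset Cell :=
  S.filter (fun d => Reach S c d)

/-- The number of connected components of a set of cells. -/
def numComponents (S : Finset Cell) : ℕ :=
  (S.image (fun c => component S c)).card

/-- `S` contains no 2 × 2 square of cells. -/
def NoSquare (S : Finset Cell) : Prop :=
  ¬ ∃ i j : ℕ, (i, j) ∈ S ∧ (i + 1, j) ∈ S ∧ (i, j + 1) ∈ S ∧ (i + 1, j + 1) ∈ S

/-- `S` is (the set of cells of) a skew shape `λ/μ`. -/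
def IsSkewCells (S : Finset Cell) : Prop :=
  ∃ lam mu : YoungDiagram, mu ≤ lam ∧ S = lam.cells \ mu.cells

/-- An `n`-ribbon: a connected skew shape with `n` cells and no 2 × 2 square. -/
def IsRibbon (n : ℕ) (S : Finset Cell) : Prop :=
  S.card = n ∧ CellsConnected S ∧ NoSquare S ∧ IsSkewCells S

/-- The spin of a ribbon: the number of rows it occupies, minus 1. -/
def ribbonSpin (S : Finset Cell) : ℕ := (S.image Prod.fst).card - 1

/-- `T` is a tiling of the cell set `S` by `n`-ribbons. -/
def IsTilingOf (n : ℕ) (S : Finset Cell) (T : Finset (Finset Cell)) : Prop :=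
  (∀ R ∈ T, IsRibbon n R) ∧
  ((T : Set (Finset Cell)).Pairwise fun A B => Disjoint A B) ∧
  T.biUnion id = S

/-- `S` can be tiled by `n`-ribbons. -/
def Tileable (n : ℕ) (S : Finset Cell) : Prop := ∃ T, IsTilingOf n S T

/-- Total spin of a tiling. -/
def tilingSpin (T : Finset (Finset Cell)) : ℕ := ∑ R ∈ T, ribbonSpin R

/-- The maximum spin of an `n`-ribbon tiling of `S`. -/
def maxSpin (n : ℕ) (S : Finset Cell) : ℕ :=
  sSup {m : ℕ | ∃ T, IsTilingOf n S T ∧ tilingSpin T = m}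

/-- `c` is the topright-most cell of `R`: maximal column and, among those, minimal row. -/
def TopRightCell (R : Finset Cell) (c : Cell) : Prop :=
  c ∈ R ∧ ∀ d ∈ R, d.2 ≤ c.2 ∧ (d.2 = c.2 → c.1 ≤ d.1)

/-- Every ribbon of the tiling `T` has its topright-most cell touching the northern
edge of the shape `S`: the cell directly above it is not in `S`. -/
def NorthernCond (S : Finset Cell) (T : Finset (Finset Cell)) : Prop :=
  ∀ R ∈ T, ∀ c : Cell, TopRightCell R c → (c.1 = 0 ∨ (c.1 - 1, c.2) ∉ S)

/-- `T` is a tiling of `S` witnessing that `S` is a horizontal `n`-ribbon strip. -/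
def IsHStripTiling (n : ℕ) (S : Finset Cell) (T : Finset (Finset Cell)) : Prop :=
  IsTilingOf n S T ∧ NorthernCond S T

/-- `S` is a horizontal `n`-ribbon strip. -/
def IsHStripCells (n : ℕ) (S : Finset Cell) : Prop :=
  IsSkewCells S ∧ ∃ T, IsHStripTiling n S T

/-- The spin of a horizontal `n`-ribbon strip (via its tiling, which is unique when it exists). -/
def stripSpin (n : ℕ) (S : Finset Cell) : ℕ :=
  if h : ∃ T, IsHStripTiling n S T then tilingSpin h.choose else 0

/-- Conjugate (transpose) of a set of cells. -/
def swapCells (S : Finset Cell) : Finset Cell := S.image Prod.swap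

/-- `S` is a vertical `n`-ribbon strip: its conjugate is a horizontal one. -/
def IsVStripCells (n : ℕ) (S : Finset Cell) : Prop :=
  IsHStripCells n (swapCells S)

/-- The spin of a vertical `n`-ribbon strip with `k = |S|/n` ribbons:
`k (n-1)` minus the spin of the conjugate strip. -/
def vStripSpin (n : ℕ) (S : Finset Cell) : ℕ :=
  (S.card / n) * (n - 1) - stripSpin n (swapCells S)

/-- `T` is a tiling of `S` witnessing that `S` is a vertical `n`-ribbon strip. -/
def IsVStripTiling (n : ℕ) (S : Finset Cell) (T : Finset (Finset Cell)) : Prop :=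
  IsHStripTiling n (swapCells S) (T.image swapCells)

/-- `mu` is obtained from `lam` by removing a single `n`-ribbon. -/
def RibbonStep (n : ℕ) (lam mu : YoungDiagram) : Prop :=
  mu ≤ lam ∧ IsRibbon n (lam.cells \ mu.cells)

/-- `delta` is the `n`-core of `lam`: it is obtained from `lam` by successively removing
`n`-ribbons, and no further `n`-ribbon can be removed from it. -/
def IsNCoreOf (n : ℕ) (delta lam : YoungDiagram) : Prop :=
  Relation.ReflTransGen (RibbonStep n) lam delta ∧ ∀ mu, ¬ RibbonStep n delta mu

/-- The `n`-core of a partition (defined via choice; it exists and is unique). -/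
def nCore (n : ℕ) (lam : YoungDiagram) : YoungDiagram :=
  if h : ∃ d, IsNCoreOf n d lam then h.choose else lam

/-- A semistandard `n`-ribbon tableau of shape `lam/mu` with entries in `{1, …, N}`:
a chain of partitions `mu = μ⁰ ⊆ μ¹ ⊆ ⋯ ⊆ μᴺ = lam` where each `μⁱ/μ^{i-1}` is a (possibly
empty) horizontal `n`-ribbon strip, together with the (unique) tiling of each strip. -/
structure RibbonTableau (n N : ℕ) (lam mu : YoungDiagram) where
  chain : Fin (N + 1) → YoungDiagram
  chain_zero : chain 0 = mu
  chain_last : chain (Fin.last N) = lam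
  chain_mono : ∀ i : Fin N, chain i.castSucc ≤ chain i.succ
  tiling : Fin N → Finset (Finset Cell)
  tiling_strip : ∀ i : Fin N,
    IsHStripTiling n ((chain i.succ).cells \ (chain i.castSucc).cells) (tiling i)

/-- The spin of a ribbon tableau. -/
def RibbonTableau.spin {n N : ℕ} {lam mu : YoungDiagram} (T : RibbonTableau n N lam mu) : ℕ :=
  ∑ i : Fin N, tilingSpin (T.tiling i)

/-- A standard ribbon tableau: each letter occurs exactly once. -/
def RibbonTableau.IsStandard {n N : ℕ} {lam mu : YoungDiagram}
    (T : RibbonTableau n N lam mu) : Prop :=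
  ∀ i : Fin N, (T.tiling i).card = 1

/-- The monomial `q^{spin T} x^{weight T}` attached to a ribbon tableau. -/
def tableauTerm {n N : ℕ} {lam mu : YoungDiagram} (T : RibbonTableau n N lam mu) :
    MvPolynomial (Fin N) (Polynomial ℤ) :=
  MvPolynomial.C (Polynomial.X ^ T.spin) *
    ∏ i : Fin N, MvPolynomial.X i ^ (T.tiling i).card

/-- The ribbon function `𝒢_{lam/mu}(x₁, …, x_N; q)`. -/
def ribbonFn (n N : ℕ) (lam mu : YoungDiagram) : MvPolynomial (Fin N) (Polynomial ℤ) :=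
  ∑ᶠ T : RibbonTableau n N lam mu, tableauTerm T

/-- `𝒢_lam = 𝒢_{lam/(n-core of lam)}`. -/
def G (n N : ℕ) (lam : YoungDiagram) : MvPolynomial (Fin N) (Polynomial ℤ) :=
  ribbonFn n N lam (nCore n lam)

/-- The Schur polynomial `s_ν(x₁,…,x_N)`, realized as the `n = 1` ribbon function
(1-ribbon tableaux are exactly semistandard Young tableaux, and all spins are 0). -/
def schurPoly (N : ℕ) (nu : YoungDiagram) : MvPolynomial (Fin N) (Polynomial ℤ) :=
  ribbonFn 1 N nu ⊥

/-- The cells of the `i`-th horizontal strip of a decomposition. -/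
def stripCells {len : ℕ} (strip : Fin len → Finset (Finset Cell)) (i : Fin len) : Finset Cell :=
  (strip i).biUnion id

/-- The cells of `lam` together with the strips up to (and including) `i`. -/
def partialCells {len : ℕ} (strip : Fin len → Finset (Finset Cell)) (lam : YoungDiagram)
    (i : Fin len) : Finset Cell :=
  lam.cells ∪ (Finset.univ.filter (fun j => j ≤ i)).biUnion (fun j => stripCells strip j)

/-- The union of the cells of the strips strictly before `i`. -/
def prevCells {len : ℕ} (strip : Fin len → Finset (Finset Cell)) (i : Fin len) : Finset Cell :=
  (Finset.univ.filter (fun j => j < i)).biUnion (fun j => stripCells strip j)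

/-- Two cell sets touch if some cell of one is adjacent to some cell of the other. -/
def Touches (A B : Finset Cell) : Prop :=
  ∃ a ∈ A, ∃ b ∈ B, Adj a b

/-- `R` is the rightmost ribbon within the cell set `C`. -/
def IsRightmostIn (R C : Finset Cell) : Prop :=
  ∃ c ∈ R, ∀ d ∈ C, d.2 ≤ c.2

/-- A border `n`-ribbon strip of shape `mu/lam`: the connected skew shape `mu/lam` with a
distinguished decomposition into disjoint non-empty horizontal `n`-ribbon strips
`T₁, …, T_len` (each recorded by its tiling) such that each partial union is a skew shape,
`T₁` is connected, and for `i ≥ 2` every connected component `C` of `Tᵢ` is such that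
`C ∪ (T₁ ∪ ⋯ ∪ T_{i-1})` is not a horizontal `n`-ribbon strip and only the rightmost
ribbon of `C` touches `T₁ ∪ ⋯ ∪ T_{i-1}`. -/
structure BorderRibbonStrip (n : ℕ) (lam mu : YoungDiagram) where
  len : ℕ
  len_pos : 1 ≤ len
  strip : Fin len → Finset (Finset Cell)
  sub : lam ≤ mu
  connected : CellsConnected (mu.cells \ lam.cells)
  nonempty : ∀ i, (strip i).Nonempty
  disj : ∀ i j, i ≠ j → Disjoint (stripCells strip i) (stripCells strip j)
  cover : Finset.univ.biUnion (fun i => stripCells strip i) = mu.cells \ lam.cells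
  shape : ∀ i, ∃ nu : YoungDiagram, nu.cells = partialCells strip lam i
  hstrips : ∀ i, IsHStripTiling n (stripCells strip i) (strip i)
  first_connected : CellsConnected (stripCells strip ⟨0, len_pos⟩)
  comp_cond : ∀ i : Fin len, 0 < (i : ℕ) → ∀ c ∈ stripCells strip i,
    (¬ IsHStripCells n (component (stripCells strip i) c ∪ prevCells strip i)) ∧
    (∀ R ∈ strip i, R ⊆ component (stripCells strip i) c →
      Touches R (prevCells strip i) → IsRightmostIn R (component (stripCells strip i) c))

/-- The height of a border ribbon strip: total number of connected components of its
horizontal strips, minus 1. -/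
def BorderRibbonStrip.height {n : ℕ} {lam mu : YoungDiagram}
    (S : BorderRibbonStrip n lam mu) : ℕ :=
  (∑ i : Fin S.len, numComponents (stripCells S.strip i)) - 1

/-- The spin of a border ribbon strip. -/
def BorderRibbonStrip.spin {n : ℕ} {lam mu : YoungDiagram}
    (S : BorderRibbonStrip n lam mu) : ℕ :=
  ∑ i : Fin S.len, tilingSpin (S.strip i)

/-- The size (number of ribbons) of a border ribbon strip. -/
def BorderRibbonStrip.size {n : ℕ} {lam mu : YoungDiagram}
    (S : BorderRibbonStrip n lam mu) : ℕ :=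
  ∑ i : Fin S.len, (S.strip i).card

/-- `𝒳^{mu/lam}_k(q) = Σ_S (-1)^{h(S)} q^{s(S)}` over border `n`-ribbon strips of shape
`mu/lam` with `k` ribbons. -/
def chiX (n k : ℕ) (lam mu : YoungDiagram) : Polynomial ℤ :=
  ∑ᶠ S : BorderRibbonStrip n lam mu,
    if S.size = k then (-1) ^ S.height * Polynomial.X ^ S.spin else 0

/-- The complete homogeneous symmetric polynomial of degree `k` evaluated at the family `v`. -/
def hPoly {ι R : Type*} [Fintype ι] [DecidableEq ι] [CommSemiring R] (k : ℕ) (v : ι → R) : R :=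
  ∑ d : Sym ι k, ((d : Multiset ι).map v).prod

/-- The elementary symmetric polynomial of degree `k` evaluated at the family `v`. -/
def ePoly {ι R : Type*} [Fintype ι] [DecidableEq ι] [CommSemiring R] (k : ℕ) (v : ι → R) : R :=
  ∑ s ∈ Finset.univ.powersetCard k, ∏ i ∈ s, v i

/-- The alphabet `A_q(x) = {q^{2j} x_i : 1 ≤ i ≤ N, 0 ≤ j ≤ n-1}`. -/
def alphabetVal (n N : ℕ) : Fin N × Fin n → MvPolynomial (Fin N) (Polynomial ℤ) :=
  fun p => MvPolynomial.C (Polynomial.X ^ (2 * (p.2 : ℕ))) * MvPolynomial.X p.1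

/-- The Schur function `s_lam` evaluated at the alphabet `A_q(x)`,
i.e. the plethysm `s_lam[(1+q²+⋯+q^{2n-2})X]` in `N` variables. -/
def schurAlph (n N : ℕ) (lam : YoungDiagram) : MvPolynomial (Fin N) (Polynomial ℤ) :=
  MvPolynomial.aeval
    (fun t : Fin (n * N) => alphabetVal n N (Prod.swap (finProdFinEquiv.symm t)))
    (schurPoly (n * N) lam)

end

namespace RibbonPieri

/-! ### Boundary functions of Young diagrams -/

theorem exists_not_mem (lam : YoungDiagram) (c : ℤ) :
    ∃ t : ℕ, (t + (-c).toNat, t + c.toNat) ∉ lam := by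
  by_contra h
  push Not at h
  have : Set.InjOn (fun t : ℕ => (t + (-c).toNat, t + c.toNat)) Set.univ := by
    intro a _ b _ hab
    simpa using hab
  refine Set.infinite_univ (α := ℕ) (Set.Finite.of_finite_image (lam.cells.finite_toSet.subset ?_)
    this)
  rintro _ ⟨t, -, rfl⟩
  exact h t

/-- The boundary function of `lam`: `bd lam c` is the row index of the first cell on the diagonal
`column - row = c` that does not belong to `lam`.  A diagram is determined by its boundary
function, which is weakly decreasing with steps `0` or `1`; the step
`bd lam c - bd lam (c + 1)` is the bead of the Maya diagram of `lam` at position `c`. -/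
noncomputable def bd (lam : YoungDiagram) (c : ℤ) : ℤ :=
  (Nat.find (exists_not_mem lam c) + (-c).toNat : ℕ)

theorem mem_iff (lam : YoungDiagram) (i j : ℕ) :
    (i, j) ∈ lam ↔ (i : ℤ) < bd lam ((j : ℤ) - i) := by
  have key : ∀ (t : ℕ) (c : ℤ), (t + (-c).toNat, t + c.toNat) ∈ lam ↔
      t < Nat.find (exists_not_mem lam c) := by
    intro t c
    rw [Nat.lt_find_iff]
    constructor
    · intro h m hm
      rw [not_not]
      exact lam.up_left_mem (by omega) (by omega) h
    · intro h
      simpa using h t le_rfl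
  have h := key (min i j) ((j : ℤ) - i)
  have e1 : min i j + (-((j : ℤ) - i)).toNat = i := by omega
  have e2 : min i j + ((j : ℤ) - i).toNat = j := by omega
  rw [e1, e2] at h
  rw [h, bd]
  omega

theorem bd_nonneg (lam : YoungDiagram) (c : ℤ) : 0 ≤ bd lam c := by
  unfold bd; omega

theorem neg_le_bd (lam : YoungDiagram) (c : ℤ) : -c ≤ bd lam c := by
  unfold bd; omega

/-- Membership criterion for a cell given by its row and its content. -/
theorem mem_iff' (lam : YoungDiagram) (i c : ℤ) (h0 : 0 ≤ i) (h1 : -c ≤ i) :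
    (i.toNat, (i + c).toNat) ∈ lam ↔ i < bd lam c := by
  rw [mem_iff]
  have e : (((i + c).toNat : ℤ) - (i.toNat : ℤ)) = c := by omega
  rw [e]
  omega

theorem bd_succ_le (lam : YoungDiagram) (c : ℤ) : bd lam (c + 1) ≤ bd lam c := by
  by_contra! h
  have h1 := bd_nonneg lam c
  have h2 := neg_le_bd lam c
  have h3 := (mem_iff' lam (bd lam c) (c + 1) h1 (by omega)).2 h
  have h4 : ((bd lam c).toNat, (bd lam c + c).toNat) ∈ lam :=
    lam.up_left_mem le_rfl (by omega) h3
  rw [mem_iff' lam _ _ h1 h2] at h4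
  omega

theorem bd_le_succ (lam : YoungDiagram) (c : ℤ) : bd lam c ≤ bd lam (c + 1) + 1 := by
  by_contra! h
  have h1 := bd_nonneg lam (c + 1)
  have h2 := neg_le_bd lam (c + 1)
  have h3 := (mem_iff' lam (bd lam (c + 1) + 1) c (by omega) (by omega)).2 (by omega)
  have h4 : ((bd lam (c + 1)).toNat, (bd lam (c + 1) + (c + 1)).toNat) ∈ lam :=
    lam.up_left_mem (by omega) (by omega) h3
  rw [mem_iff' lam _ _ h1 h2] at h4
  omega

theorem le_iff_bd {lam mu : YoungDiagram} : lam ≤ mu ↔ ∀ c, bd lam c ≤ bd mu c := by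
  constructor
  · intro h c
    by_contra! h1
    have h2 := bd_nonneg mu c
    have h3 := neg_le_bd mu c
    have h4 := (mem_iff' lam _ c h2 h3).2 h1
    have h5 := (mem_iff' mu _ c h2 h3).1 (h h4)
    omega
  · intro h x hx
    obtain ⟨i, j⟩ := x
    have h1 := (mem_iff lam i j).1 hx
    exact (mem_iff mu i j).2 (lt_of_lt_of_le h1 (h _))

theorem eq_of_bd {lam mu : YoungDiagram} (h : ∀ c, bd lam c = bd mu c) : lam = mu :=
  le_antisymm (le_iff_bd.2 fun c => (h c).le) (le_iff_bd.2 fun c => (h c).ge)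

/-- `lam` has no cell of content `c` with `|c| ≥ L`. -/
def Bounded (L : ℤ) (lam : YoungDiagram) : Prop :=
  0 ≤ L ∧ (∀ c, L ≤ c → bd lam c = 0) ∧ (∀ c, c ≤ -L → bd lam c = -c)

theorem Bounded.mono {L L' : ℤ} {lam : YoungDiagram} (h : Bounded L lam) (hL : L ≤ L') :
    Bounded L' lam :=
  ⟨by have := h.1; omega, fun c hc => h.2.1 c (by omega), fun c hc => h.2.2 c (by omega)⟩

theorem Bounded.of_le {L : ℤ} {lam mu : YoungDiagram} (h : Bounded L lam) (hle : mu ≤ lam) :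
    Bounded L mu := by
  rw [le_iff_bd] at hle
  refine ⟨h.1, fun c hc => ?_, fun c hc => ?_⟩
  · have := h.2.1 c hc; have := hle c; have := bd_nonneg mu c; omega
  · have := h.2.2 c hc; have := hle c; have := neg_le_bd mu c; omega

theorem exists_bounded (lam : YoungDiagram) : ∃ L, Bounded L lam := by
  obtain ⟨B, hB⟩ : ∃ B : ℕ, ∀ i j : ℕ, (i, j) ∈ lam → i < B ∧ j < B := by
    refine ⟨lam.cells.sup (fun x => x.1 + x.2) + 1, fun i j h => ?_⟩
    have := Finset.le_sup (f := fun x : ℕ × ℕ => x.1 + x.2) (show (i, j) ∈ lam.cells from h)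
    simp only at this
    omega
  refine ⟨B, by omega, fun c hc => ?_, fun c hc => ?_⟩
  · have h0 := bd_nonneg lam c
    by_contra h
    have := hB _ _ ((mem_iff' lam 0 c le_rfl (by omega)).2 (by omega))
    omega
  · have h0 := neg_le_bd lam c
    by_contra h
    have := hB _ _ ((mem_iff' lam (-c) c (by omega) (by omega)).2 (by omega))
    omega

theorem anti_of_step {F : ℤ → ℤ} (h : ∀ c, F (c + 1) ≤ F c) {a b : ℤ} (hab : a ≤ b) :
    F b ≤ F a := by
  obtain ⟨m, rfl⟩ : ∃ m : ℕ, b = a + m := ⟨(b - a).toNat, by omega⟩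
  clear hab
  induction m with
  | zero => simp
  | succ m ih =>
    have := h (a + m)
    push_cast
    rw [← add_assoc]
    omega

theorem lip_of_step {F : ℤ → ℤ} (h : ∀ c, F c ≤ F (c + 1) + 1) {a b : ℤ} (hab : a ≤ b) :
    F a ≤ F b + (b - a) := by
  have := anti_of_step (F := fun c => - F c - c) (fun c => by have := h c; omega) hab
  omega

theorem bd_anti (lam : YoungDiagram) {a b : ℤ} (hab : a ≤ b) : bd lam b ≤ bd lam a :=
  anti_of_step (bd_succ_le lam) hab

theorem bd_lip (lam : YoungDiagram) {a b : ℤ} (hab : a ≤ b) : bd lam a ≤ bd lam b + (b - a) :=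
  lip_of_step (bd_le_succ lam) hab

/-- Every function with steps `0` or `1` and the right behaviour at infinity is the boundary
function of a diagram. -/
theorem exists_of_bd (F : ℤ → ℤ) (L : ℤ) (hL : 0 ≤ L) (h1 : ∀ c, F (c + 1) ≤ F c)
    (h2 : ∀ c, F c ≤ F (c + 1) + 1) (h3 : ∀ c, L ≤ c → F c = 0)
    (h4 : ∀ c, c ≤ -L → F c = -c) : ∃ lam : YoungDiagram, ∀ c, bd lam c = F c := by
  have hmem : ∀ i j : ℕ, (i : ℤ) < F ((j : ℤ) - i) → (i : ℤ) < 2 * L ∧ (j : ℤ) < 2 * L := by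
    intro i j h
    have a1 : (j : ℤ) - i < L := by
      by_contra! hc; have := h3 _ hc; omega
    have a2 : -L < (j : ℤ) - i := by
      by_contra! hc; have := h4 _ hc; omega
    have a3 := anti_of_step h1 a2.le
    have a4 := h4 (-L) le_rfl
    omega
  let C : Finset (ℕ × ℕ) := ((Finset.range (2 * L).toNat) ×ˢ (Finset.range (2 * L).toNat)).filter
    (fun x => (x.1 : ℤ) < F ((x.2 : ℤ) - x.1))
  have hC : ∀ i j : ℕ, (i, j) ∈ C ↔ (i : ℤ) < F ((j : ℤ) - i) := by
    intro i j
    simp only [C, Finset.mem_filter, Finset.mem_product, Finset.mem_range]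
    constructor
    · exact fun h => h.2
    · intro h
      have := hmem i j h
      exact ⟨by omega, h⟩
  have hlow : IsLowerSet (C : Set (ℕ × ℕ)) := by
    rintro ⟨i, j⟩ ⟨i', j'⟩ hle h
    rw [Prod.mk_le_mk] at hle
    have h' := (hC i j).1 h
    refine (hC i' j').2 ?_
    rcases le_total ((j : ℤ) - i) ((j' : ℤ) - i') with hc | hc
    · have := lip_of_step h2 hc; omega
    · have := anti_of_step h1 hc; omega
  refine ⟨⟨C, hlow⟩, fun c => ?_⟩
  set lam : YoungDiagram := ⟨C, hlow⟩
  have hl : ∀ i : ℤ, 0 ≤ i → -c ≤ i → (i < bd lam c ↔ i < F c) := by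
    intro i h0 h5
    rw [← mem_iff' lam i c h0 h5]
    have e : (((i + c).toNat : ℤ) - (i.toNat : ℤ)) = c := by omega
    have := hC i.toNat (i + c).toNat
    rw [e] at this
    refine this.trans ?_
    omega
  have b1 := bd_nonneg lam c
  have b2 := neg_le_bd lam c
  have b3 : 0 ≤ F c := by
    rcases le_total c L with hc | hc
    · have := anti_of_step h1 hc; have := h3 L le_rfl; omega
    · have := h3 c hc; omega
  have b4 : -c ≤ F c := by
    rcases le_total (-L) c with hc | hc
    · have := lip_of_step h2 hc; have := h4 (-L) le_rfl; omega
    · have := h4 c hc; omega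
  have c1 := hl (bd lam c) b1 b2
  have c2 := hl (F c) b3 b4
  omega

theorem bd_transpose (lam : YoungDiagram) (c : ℤ) :
    bd lam.transpose c = bd lam (-c) - c := by
  have hl : ∀ i : ℤ, 0 ≤ i → -c ≤ i → (i < bd lam.transpose c ↔ i < bd lam (-c) - c) := by
    intro i h0 h1
    rw [← mem_iff' _ i c h0 h1, YoungDiagram.mem_transpose]
    have := mem_iff' lam (i + c) (-c) (by omega) (by omega)
    rw [show i + c + -c = i by ring] at this
    refine this.trans ?_
    omega
  have b1 := bd_nonneg lam.transpose c
  have b2 := neg_le_bd lam.transpose c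
  have b3 := bd_nonneg lam (-c)
  have b4 := neg_le_bd lam (-c)
  have c1 := hl _ b1 b2
  have c2 := hl (bd lam (-c) - c) (by omega) (by omega)
  omega

theorem Bounded.transpose {L : ℤ} {lam : YoungDiagram} (h : Bounded L lam) :
    Bounded L lam.transpose := by
  refine ⟨h.1, fun c hc => ?_, fun c hc => ?_⟩
  · rw [bd_transpose, h.2.2 (-c) (by omega)]; omega
  · rw [bd_transpose, h.2.1 (-c) (by omega)]; omega

theorem mem_sdiff_iff (lam mu : YoungDiagram) (i j : ℕ) :
    (i, j) ∈ lam.cells \ mu.cells ↔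
      (i : ℤ) < bd lam ((j : ℤ) - i) ∧ bd mu ((j : ℤ) - i) ≤ (i : ℤ) := by
  rw [Finset.mem_sdiff, YoungDiagram.mem_cells, YoungDiagram.mem_cells, mem_iff, mem_iff]
  omega

theorem mem_sdiff_iff' (lam mu : YoungDiagram) (i c : ℤ) (h0 : 0 ≤ i) (h1 : -c ≤ i) :
    (i.toNat, (i + c).toNat) ∈ lam.cells \ mu.cells ↔ i < bd lam c ∧ bd mu c ≤ i := by
  rw [Finset.mem_sdiff, YoungDiagram.mem_cells, YoungDiagram.mem_cells, mem_iff' _ _ _ h0 h1,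
    mem_iff' _ _ _ h0 h1]
  omega

theorem transpose_le_iff {lam mu : YoungDiagram} : lam.transpose ≤ mu.transpose ↔ lam ≤ mu := by
  rw [le_iff_bd, le_iff_bd]
  constructor
  · intro h c
    have := h (-c)
    rw [bd_transpose, bd_transpose, neg_neg] at this
    omega
  · intro h c
    have := h (-c)
    rw [bd_transpose, bd_transpose]
    omega

theorem transpose_inj {lam mu : YoungDiagram} : lam.transpose = mu.transpose ↔ lam = mu :=
  ⟨fun h => le_antisymm (transpose_le_iff.1 h.le) (transpose_le_iff.1 h.ge), fun h => h ▸ rfl⟩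

theorem swapCells_sdiff (lam mu : YoungDiagram) :
    swapCells (lam.cells \ mu.cells) = lam.transpose.cells \ mu.transpose.cells := by
  ext ⟨i, j⟩
  simp only [swapCells, Finset.mem_image, Finset.mem_sdiff, YoungDiagram.mem_cells,
    YoungDiagram.mem_transpose, Prod.swap_prod_mk]
  constructor
  · rintro ⟨⟨a, b⟩, h, hab⟩
    simp only [Prod.swap_prod_mk, Prod.mk.injEq] at hab
    obtain ⟨rfl, rfl⟩ := hab
    exact h
  · intro h
    exact ⟨(j, i), h, rfl⟩

theorem card_transpose (lam : YoungDiagram) : lam.transpose.card = lam.card := by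
  simp [YoungDiagram.transpose, YoungDiagram.card]

/-! ### Adding and removing one ribbon -/

/-- `lam` arises from `mu` by adding the ribbon whose contents are `p + 1, …, p + n`; in the Maya
diagram, a bead hops from `p` to `p + n`. -/
def Hop (n : ℕ) (p : ℤ) (mu lam : YoungDiagram) : Prop :=
  ∀ c, bd lam c = bd mu c + if p + 1 ≤ c ∧ c ≤ p + n then 1 else 0

theorem Hop.at {n : ℕ} {p : ℤ} {mu lam : YoungDiagram} (h : Hop n p mu lam) (c : ℤ) :
    (p + 1 ≤ c ∧ c ≤ p + n ∧ bd lam c = bd mu c + 1) ∨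
      ((c < p + 1 ∨ p + n < c) ∧ bd lam c = bd mu c) := by
  have := h c
  split_ifs at this <;> omega

theorem Hop.le {n : ℕ} {p : ℤ} {mu lam : YoungDiagram} (h : Hop n p mu lam) : mu ≤ lam :=
  le_iff_bd.2 fun c => by have := h.at c; omega

theorem Hop.right_unique {n : ℕ} {p : ℤ} {mu lam lam' : YoungDiagram} (h : Hop n p mu lam)
    (h' : Hop n p mu lam') : lam = lam' :=
  eq_of_bd fun c => by rw [h c, h' c]

theorem Hop.left_unique {n : ℕ} {p : ℤ} {mu mu' lam : YoungDiagram} (h : Hop n p mu lam)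
    (h' : Hop n p mu' lam) : mu = mu' :=
  eq_of_bd fun c => by have := h c; have := h' c; omega

theorem Hop.transpose {n : ℕ} {p : ℤ} {mu lam : YoungDiagram} (h : Hop n p mu lam) :
    Hop n (-p - n - 1) mu.transpose lam.transpose := by
  intro c
  rw [bd_transpose, bd_transpose]
  have := h.at (-c)
  split_ifs <;> omega

/-- A ribbon can be added at `p` iff the Maya diagram has a bead at `p` and none at `p + n`. -/
theorem exists_hop_right {n : ℕ} (hn : 1 ≤ n) {p : ℤ} {mu : YoungDiagram} :
    (∃ lam, Hop n p mu lam) ↔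
      bd mu p = bd mu (p + 1) + 1 ∧ bd mu (p + n) = bd mu (p + n + 1) := by
  constructor
  · rintro ⟨lam, h⟩
    have a1 := h.at p
    have a2 := h.at (p + 1)
    have a3 := h.at (p + n)
    have a4 := h.at (p + n + 1)
    have b1 := bd_succ_le lam p
    have b2 := bd_le_succ lam (p + n)
    have b3 := bd_le_succ mu p
    have b4 := bd_succ_le mu (p + n)
    omega
  · rintro ⟨h1, h2⟩
    obtain ⟨L, hL⟩ := exists_bounded mu
    refine (exists_of_bd
      (fun c => bd mu c + if p + 1 ≤ c ∧ c ≤ p + n then 1 else 0) (L + |p| + n + 1)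
      (by have := hL.1; have := abs_nonneg p; omega) ?_ ?_ ?_ ?_).imp (fun lam hlam => hlam)
    · intro c
      have b1 := bd_succ_le mu c
      split_ifs with i1 i2
      · omega
      · have : c = p := by omega
        subst this; omega
      · omega
      · omega
    · intro c
      have b1 := bd_le_succ mu c
      split_ifs with i1 i2
      · omega
      · have : c = p + n := by omega
        subst this; omega
      · omega
      · omega
    · intro c hc
      have := hL.2.1 c (by have := abs_nonneg p; omega)
      have := le_abs_self p
      have := hL.1
      rw [if_neg (by omega)]; omega
    · intro c hc
      have := hL.2.2 c (by have := abs_nonneg p; omega)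
      have := neg_abs_le p
      have := hL.1
      rw [if_neg (by omega)]; omega

/-- A ribbon can be removed at `p` iff the Maya diagram has a bead at `p + n` and none at `p`. -/
theorem exists_hop_left {n : ℕ} (hn : 1 ≤ n) {p : ℤ} {lam : YoungDiagram} :
    (∃ mu, Hop n p mu lam) ↔
      bd lam p = bd lam (p + 1) ∧ bd lam (p + n) = bd lam (p + n + 1) + 1 := by
  constructor
  · rintro ⟨mu, h⟩
    have a1 := h.at p
    have a2 := h.at (p + 1)
    have a3 := h.at (p + n)
    have a4 := h.at (p + n + 1)
    have b1 := bd_le_succ mu p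
    have b2 := bd_succ_le mu (p + n)
    have b3 := bd_succ_le lam p
    have b4 := bd_le_succ lam (p + n)
    omega
  · rintro ⟨h1, h2⟩
    obtain ⟨L, hL⟩ := exists_bounded lam
    refine (exists_of_bd
      (fun c => bd lam c - if p + 1 ≤ c ∧ c ≤ p + n then 1 else 0) (L + |p| + n + 1)
      (by have := hL.1; have := abs_nonneg p; omega) ?_ ?_ ?_ ?_).imp
      (fun mu hmu c => by have := hmu c; omega)
    · intro c
      have b1 := bd_succ_le lam c
      split_ifs with i1 i2
      · omega
      · omega
      · have : c = p + n := by omega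
        subst this; omega
      · omega
    · intro c
      have b1 := bd_le_succ lam c
      split_ifs with i1 i2
      · omega
      · omega
      · have : c = p := by omega
        subst this; omega
      · omega
    · intro c hc
      have := hL.2.1 c (by have := abs_nonneg p; omega)
      have := le_abs_self p
      have := hL.1
      rw [if_neg (by omega)]; omega
    · intro c hc
      have := hL.2.2 c (by have := abs_nonneg p; omega)
      have := neg_abs_le p
      have := hL.1
      rw [if_neg (by omega)]; omega

/-- The spin of the ribbon with contents `p + 1, …, p + n` along the boundary of `lam`: the number
of beads strictly between `p` and `p + n`. -/
noncomputable def sp (n : ℕ) (p : ℤ) (lam : YoungDiagram) : ℕ :=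
  (bd lam (p + 1) - bd lam (p + n)).toNat

theorem sp_cast {n : ℕ} (hn : 1 ≤ n) (p : ℤ) (lam : YoungDiagram) :
    (sp n p lam : ℤ) = bd lam (p + 1) - bd lam (p + n) := by
  have := bd_anti lam (show p + 1 ≤ p + n by omega)
  unfold sp; omega

theorem sp_lt {n : ℕ} (hn : 1 ≤ n) (p : ℤ) (lam : YoungDiagram) : sp n p lam ≤ n - 1 := by
  have := bd_lip lam (show p + 1 ≤ p + n by omega)
  have := sp_cast hn p lam
  omega

theorem Hop.sp_eq {n : ℕ} (hn : 1 ≤ n) {p : ℤ} {mu lam : YoungDiagram} (h : Hop n p mu lam) :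
    sp n p lam = sp n p mu := by
  have := h.at (p + 1)
  have := h.at (p + n)
  unfold sp
  congr 1
  omega

theorem sp_transpose {n : ℕ} (hn : 1 ≤ n) (p : ℤ) (lam : YoungDiagram) :
    sp n (-p - n - 1) lam.transpose = n - 1 - sp n p lam := by
  have h1 := sp_cast hn (-p - n - 1) lam.transpose
  have h2 := sp_cast hn p lam
  have h3 := sp_lt hn p lam
  rw [bd_transpose, bd_transpose, show -(-p - n - 1 + 1) = p + n by ring,
    show -(-p - n - 1 + (n : ℤ)) = p + 1 by ring] at h1
  omega

/-! ### Ribbon Schur operators and their commutation -/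

section Operators

open Finsupp

variable {A : Type*} [CommRing A]

/-- The ribbon adding operator at `p`, weighted by the spin. -/
noncomputable def up (n : ℕ) (q : A) (p : ℤ) : Module.End A (YoungDiagram →₀ A) :=
  Finsupp.linearCombination A (fun lam : YoungDiagram =>
    if h : ∃ lam', Hop n p lam lam' then single h.choose (q ^ sp n p lam) else 0)

/-- The ribbon removing operator at `p`, weighted by the spin. -/
noncomputable def dn (n : ℕ) (q : A) (p : ℤ) : Module.End A (YoungDiagram →₀ A) :=
  Finsupp.linearCombination A (fun lam : YoungDiagram =>
    if h : ∃ mu, Hop n p mu lam then single h.choose (q ^ sp n p lam) else 0)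

variable {n : ℕ} {q : A} {p : ℤ}

theorem up_of_hop {lam lam' : YoungDiagram} (h : Hop n p lam lam') (r : A) :
    up n q p (single lam r) = single lam' (r * q ^ sp n p lam) := by
  have hex : ∃ lam', Hop n p lam lam' := ⟨lam', h⟩
  rw [up, linearCombination_single, dif_pos hex, hex.choose_spec.right_unique h]
  simp

theorem up_of_not {lam : YoungDiagram} (h : ¬ ∃ lam', Hop n p lam lam') (r : A) :
    up n q p (single lam r) = 0 := by
  rw [up, linearCombination_single, dif_neg h, smul_zero]

theorem dn_of_hop {lam mu : YoungDiagram} (h : Hop n p mu lam) (r : A) :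
    dn n q p (single lam r) = single mu (r * q ^ sp n p lam) := by
  have hex : ∃ mu, Hop n p mu lam := ⟨mu, h⟩
  rw [dn, linearCombination_single, dif_pos hex, hex.choose_spec.left_unique h]
  simp

theorem dn_of_not {lam : YoungDiagram} (h : ¬ ∃ mu, Hop n p mu lam) (r : A) :
    dn n q p (single lam r) = 0 := by
  rw [dn, linearCombination_single, dif_neg h, smul_zero]

/-- Adding at `i` after removing at `j ≠ i` is the same as removing at `j` after adding at `i`. -/
theorem hop_square (hn : 1 ≤ n) {i j : ℤ} (hij : i ≠ j) {lam nu : YoungDiagram} :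
    (∃ rho, Hop n j rho lam ∧ Hop n i rho nu) ↔ (∃ mu, Hop n i lam mu ∧ Hop n j nu mu) := by
  constructor
  · rintro ⟨rho, h1, h2⟩
    have e1 := (exists_hop_right hn).1 ⟨_, h1⟩
    have e2 := (exists_hop_right hn).1 ⟨_, h2⟩
    obtain ⟨mu, hmu⟩ : ∃ mu, Hop n i lam mu := by
      rw [exists_hop_right hn]
      have a1 := h1.at i
      have a2 := h1.at (i + 1)
      have a3 := h1.at (i + n)
      have a4 := h1.at (i + n + 1)
      have b1 := bd_succ_le rho i
      have b2 := bd_le_succ lam i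
      have b3 := bd_succ_le lam (i + n)
      have ne1 : i = j + n → False := by
        rintro rfl
        omega
      have ne2 : j = i + n → False := by
        rintro rfl
        omega
      omega
    refine ⟨mu, hmu, fun c => ?_⟩
    rw [hmu c, h2 c, h1 c]
    ring
  · rintro ⟨mu, h1, h2⟩
    have e1 := (exists_hop_left hn).1 ⟨_, h1⟩
    have e2 := (exists_hop_left hn).1 ⟨_, h2⟩
    obtain ⟨rho, hrho⟩ : ∃ rho, Hop n j rho lam := by
      rw [exists_hop_left hn]
      have a1 := h1.at j
      have a2 := h1.at (j + 1)
      have a3 := h1.at (j + n)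
      have a4 := h1.at (j + n + 1)
      have b2 := bd_succ_le lam j
      have b3 := bd_le_succ lam (j + n)
      have ne1 : i = j + n → False := by
        rintro rfl
        omega
      have ne2 : j = i + n → False := by
        rintro rfl
        omega
      omega
    refine ⟨rho, hrho, fun c => ?_⟩
    have := h1 c
    have := h2 c
    have := hrho c
    omega

theorem up_dn_comm (hn : 1 ≤ n) {i j : ℤ} (hij : i ≠ j) :
    up n q i * dn n q j = dn n q j * up n q i := by
  refine Finsupp.lhom_ext fun lam r => ?_
  rw [Module.End.mul_apply, Module.End.mul_apply]
  by_cases hsq : ∃ nu rho, Hop n j rho lam ∧ Hop n i rho nu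
  · obtain ⟨nu, rho, h1, h2⟩ := hsq
    obtain ⟨mu, h3, h4⟩ := (hop_square hn hij).1 ⟨rho, h1, h2⟩
    rw [dn_of_hop h1, up_of_hop h2, up_of_hop h3, dn_of_hop h4, mul_assoc, mul_assoc, ← pow_add,
      ← pow_add]
    congr 3
    have s1 := sp_cast hn i rho
    have s2 := sp_cast hn j mu
    have s3 := sp_cast hn i lam
    have s4 := sp_cast hn j lam
    have a1 := h1.at (i + 1)
    have a2 := h1.at (i + n)
    have a3 := h3.at (j + 1)
    have a4 := h3.at (j + n)
    omega
  · have hsq' : ¬ ∃ nu mu, Hop n i lam mu ∧ Hop n j nu mu := by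
      rintro ⟨nu, h⟩
      exact hsq ⟨nu, (hop_square hn hij).2 h⟩
    push Not at hsq hsq'
    have l : up n q i (dn n q j (single lam r)) = 0 := by
      by_cases h : ∃ rho, Hop n j rho lam
      · obtain ⟨rho, h⟩ := h
        rw [dn_of_hop h, up_of_not]
        rintro ⟨nu, h'⟩
        exact hsq nu rho h h'
      · rw [dn_of_not h, map_zero]
    have r : dn n q j (up n q i (single lam r)) = 0 := by
      by_cases h : ∃ mu, Hop n i lam mu
      · obtain ⟨mu, h⟩ := h
        rw [up_of_hop h, dn_of_not]
        rintro ⟨nu, h'⟩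
        exact hsq' nu mu h h'
      · rw [up_of_not h, map_zero]
    rw [l, r]

/-- The `q`-binomial type product `(1 + x y)(1 + q² x y) ⋯ (1 + q^{2t-2} x y)`. -/
noncomputable def Ef (q x y : A) (t : ℕ) : A := ∏ j ∈ Finset.range t, (1 + q ^ (2 * j) * x * y)

/-- The number of beads of `lam` at the positions `p, …, p + n - 1`. -/
noncomputable def win (n : ℕ) (p : ℤ) (lam : YoungDiagram) : ℕ := (bd lam p - bd lam (p + n)).toNat

theorem win_cast (n : ℕ) (p : ℤ) (lam : YoungDiagram) :
    (win n p lam : ℤ) = bd lam p - bd lam (p + n) := by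
  have := bd_anti lam (show p ≤ p + n by omega)
  unfold win; omega

/-- The diagonal operator multiplying `lam` by the product `Ef` for the number of beads in the
window starting at `p`. -/
noncomputable def Ed (n : ℕ) (q x y : A) (p : ℤ) : Module.End A (YoungDiagram →₀ A) :=
  Finsupp.linearCombination A (fun lam : YoungDiagram => single lam (Ef q x y (win n p lam)))

theorem Ed_single (q x y : A) (p : ℤ) (lam : YoungDiagram) (r : A) :
    Ed n q x y p (single lam r) = single lam (r * Ef q x y (win n p lam)) := by
  rw [Ed, linearCombination_single]; simp

theorem Ed_apply (q x y : A) (p : ℤ) (f : YoungDiagram →₀ A) (nu : YoungDiagram) :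
    Ed n q x y p f nu = f nu * Ef q x y (win n p nu) := by
  induction f using Finsupp.induction_linear with
  | zero => simp
  | add f g hf hg => rw [map_add, Finsupp.add_apply, hf, hg, Finsupp.add_apply, add_mul]
  | single a b =>
    rw [Ed_single]
    by_cases h : a = nu
    · subst h; simp
    · rw [single_eq_of_ne' h, single_eq_of_ne' h, zero_mul]

/-- One-site exchange relation: moving a lowering factor past a raising factor at the same
position changes the window of the diagonal operator by one step. -/
theorem exchange (hn : 1 ≤ n) (q x y : A) (p : ℤ) :
    (1 + x • dn n q p) * (1 + y • up n q p) * Ed n q x y (p + 1) =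
      Ed n q x y p * ((1 + y • up n q p) * (1 + x • dn n q p)) := by
  refine Finsupp.lhom_ext fun lam r => ?_
  have w0 := win_cast n p lam
  have w1 := win_cast n (p + 1) lam
  have s0 := sp_cast hn p lam
  rw [show p + 1 + (n : ℤ) = p + n + 1 by ring] at w1
  have hEf : ∀ t, Ef q x y (t + 1) = Ef q x y t * (1 + q ^ t * q ^ t * x * y) := by
    intro t
    rw [Ef, Finset.prod_range_succ, Ef, two_mul, pow_add]
  simp only [Module.End.mul_apply, LinearMap.add_apply, Module.End.one_apply, LinearMap.smul_apply,
    map_add, map_smul, Ed_single]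
  by_cases h1 : ∃ lam', Hop n p lam lam'
  · have e := (exists_hop_right hn).1 h1
    have hno : ¬ ∃ mu, Hop n p mu lam := by
      rw [exists_hop_left hn]; omega
    obtain ⟨lam', h⟩ := h1
    have a1 := h.at p
    have a2 := h.at (p + n)
    have w2 := win_cast n p lam'
    simp only [up_of_hop h, dn_of_not hno, dn_of_hop h, Ed_single, smul_zero, map_zero, add_zero,
      h.sp_eq hn]
    rw [show win n p lam = sp n p lam + 1 by omega, show win n (p + 1) lam = sp n p lam by omega,
      show win n p lam' = sp n p lam by omega, hEf]
    rw [← smul_single_one lam (r * _ * _ * _), ← smul_single_one lam (r * Ef _ _ _ _),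
      ← smul_single_one lam' (r * Ef _ _ _ _ * _), ← smul_single_one lam (r * (_ * _)),
      ← smul_single_one lam' (r * _ * _)]
    module
  · by_cases h2 : ∃ mu, Hop n p mu lam
    · have e := (exists_hop_left hn).1 h2
      obtain ⟨mu, h⟩ := h2
      have a1 := h.at p
      have a2 := h.at (p + n)
      have w2 := win_cast n p mu
      simp only [up_of_hop h, up_of_not h1, dn_of_hop h, Ed_single, smul_zero, map_zero, add_zero,
        h.sp_eq hn]
      have s1 := h.sp_eq hn
      rw [show win n p mu = sp n p mu + 1 by omega,
        show win n (p + 1) lam = sp n p mu + 1 by omega,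
        show win n p lam = sp n p mu by omega, hEf]
      rw [← smul_single_one lam, ← smul_single_one mu, ← smul_single_one lam (r * _),
        ← smul_single_one lam (r * _ * _ * _), ← smul_single_one mu (r * _ * _)]
      module
    · have := bd_succ_le lam p
      have := bd_le_succ lam p
      have := bd_succ_le lam (p + n)
      have := bd_le_succ lam (p + n)
      rw [exists_hop_right hn] at h1
      rw [exists_hop_left hn] at h2
      have hw : win n p lam = win n (p + 1) lam := by omega
      rw [← exists_hop_right hn] at h1
      rw [← exists_hop_left hn] at h2
      simp only [up_of_not h1, dn_of_not h2, smul_zero, map_zero, add_zero, hw]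

/-- The product `(1 + x d_a) ⋯ (1 + x d_{a+m-1})` of removing operators. -/
noncomputable def Dop (n : ℕ) (q x : A) (a : ℤ) : ℕ → Module.End A (YoungDiagram →₀ A)
  | 0 => 1
  | m + 1 => Dop n q x a m * (1 + x • dn n q (a + m))

/-- The product `(1 + y u_a) ⋯ (1 + y u_{a+m-1})` of adding operators. -/
noncomputable def Vop (n : ℕ) (q y : A) (a : ℤ) : ℕ → Module.End A (YoungDiagram →₀ A)
  | 0 => 1
  | m + 1 => Vop n q y a m * (1 + y • up n q (a + m))

theorem Vop_succ' (n : ℕ) (q y : A) (a : ℤ) (m : ℕ) :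
    Vop n q y a (m + 1) = (1 + y • up n q a) * Vop n q y (a + 1) m := by
  induction m with
  | zero => simp [Vop]
  | succ m ih =>
    rw [Vop, ih, Vop, mul_assoc]
    push_cast
    rw [show a + (m + 1 : ℤ) = a + 1 + m by ring]

theorem dn_comm_Vop (hn : 1 ≤ n) (q x y : A) (a : ℤ) (m : ℕ) (p : ℤ) (hp : a + m ≤ p) :
    (1 + x • dn n q p) * Vop n q y a m = Vop n q y a m * (1 + x • dn n q p) := by
  induction m with
  | zero => simp [Vop]
  | succ m ih =>
    push_cast at hp
    rw [Vop, ← mul_assoc, ih (by omega), mul_assoc, mul_assoc]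
    congr 1
    have := up_dn_comm (q := q) hn (show a + m ≠ p by omega)
    simp only [mul_add, add_mul, mul_one, one_mul, smul_mul_assoc, mul_smul_comm, this]
    module

theorem up_comm_Dop (hn : 1 ≤ n) (q x y : A) (a : ℤ) (m : ℕ) (p : ℤ) (hp : a + m ≤ p) :
    (1 + y • up n q p) * Dop n q x a m = Dop n q x a m * (1 + y • up n q p) := by
  induction m with
  | zero => simp [Dop]
  | succ m ih =>
    push_cast at hp
    rw [Dop, ← mul_assoc, ih (by omega), mul_assoc, mul_assoc]
    congr 1
    have := up_dn_comm (q := q) hn (show p ≠ a + m by omega)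
    simp only [mul_add, add_mul, mul_one, one_mul, smul_mul_assoc, mul_smul_comm, this]
    module

/-- The exchange relation for the products of removing and adding operators. -/
theorem Dop_Vop (hn : 1 ≤ n) (q x y : A) (a : ℤ) (m : ℕ) :
    Dop n q x a m * Vop n q y a m * Ed n q x y (a + m) =
      Ed n q x y a * (Vop n q y a m * Dop n q x a m) := by
  induction m with
  | zero => simp [Dop, Vop]
  | succ m ih =>
    have c1 := dn_comm_Vop hn q x y a m (a + m) le_rfl
    have c2 := up_comm_Dop hn q x y a m (a + m) le_rfl
    have ex := exchange hn q x y (a + m)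
    push_cast
    rw [Dop, Vop, ← add_assoc]
    calc _ = Dop n q x a m * ((1 + x • dn n q (a + m)) * Vop n q y a m) *
          (1 + y • up n q (a + m)) * Ed n q x y (a + m + 1) := by simp only [mul_assoc]
      _ = Dop n q x a m * Vop n q y a m * ((1 + x • dn n q (a + m)) *
          (1 + y • up n q (a + m)) * Ed n q x y (a + m + 1)) := by
        rw [c1]; simp only [mul_assoc]
      _ = (Dop n q x a m * Vop n q y a m * Ed n q x y (a + m)) * ((1 + y • up n q (a + m)) *
          (1 + x • dn n q (a + m))) := by rw [ex]; simp only [mul_assoc]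
      _ = Ed n q x y a * Vop n q y a m * (Dop n q x a m * (1 + y • up n q (a + m))) *
          (1 + x • dn n q (a + m)) := by rw [ih]; simp only [mul_assoc]
      _ = _ := by rw [← c2]; simp only [mul_assoc]

end Operators

/-! ### Ribbons in terms of boundary functions -/

/-- The cell in row `i` on the diagonal of content `c`. -/
def cell (i c : ℤ) : Cell := (i.toNat, (i + c).toNat)

/-- `R` is the set of the cells following the boundary of `rho` along the contents
`p + 1, …, p + n`. -/
def IsRib (n : ℕ) (p : ℤ) (rho : YoungDiagram) (R : Finset Cell) : Prop :=
  ∀ i j : ℕ, (i, j) ∈ R ↔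
    p + 1 ≤ (j : ℤ) - i ∧ (j : ℤ) - i ≤ p + n ∧ (i : ℤ) = bd rho ((j : ℤ) - i)

theorem Hop.isRib {n : ℕ} {p : ℤ} {mu lam : YoungDiagram} (h : Hop n p mu lam) :
    IsRib n p mu (lam.cells \ mu.cells) := by
  intro i j
  rw [mem_sdiff_iff]
  have := h.at ((j : ℤ) - i)
  omega

theorem IsRib.cell_mem_iff {n : ℕ} {p : ℤ} {rho : YoungDiagram} {R : Finset Cell}
    (h : IsRib n p rho R) {i c : ℤ} (h0 : 0 ≤ i) (h1 : -c ≤ i) :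
    cell i c ∈ R ↔ p + 1 ≤ c ∧ c ≤ p + n ∧ i = bd rho c := by
  rw [cell, h]
  have e : (((i + c).toNat : ℤ) - (i.toNat : ℤ)) = c := by omega
  rw [e]
  omega

theorem IsRib.cell_mem {n : ℕ} {p : ℤ} {rho : YoungDiagram} {R : Finset Cell}
    (h : IsRib n p rho R) {c : ℤ} (h1 : p + 1 ≤ c) (h2 : c ≤ p + n) :
    cell (bd rho c) c ∈ R :=
  (h.cell_mem_iff (bd_nonneg _ _) (neg_le_bd _ _)).2 ⟨h1, h2, rfl⟩

theorem IsRib.eq_image {n : ℕ} {p : ℤ} {rho : YoungDiagram} {R : Finset Cell}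
    (h : IsRib n p rho R) :
    R = (Finset.Icc (p + 1) (p + n)).image (fun c => cell (bd rho c) c) := by
  ext ⟨i, j⟩
  rw [Finset.mem_image, h]
  constructor
  · rintro ⟨h1, h2, h3⟩
    refine ⟨(j : ℤ) - i, Finset.mem_Icc.2 ⟨h1, h2⟩, ?_⟩
    rw [← h3, cell, Prod.mk.injEq]
    omega
  · rintro ⟨c, hc, hcell⟩
    rw [Finset.mem_Icc] at hc
    have := h.cell_mem hc.1 hc.2
    rw [hcell] at this
    exact (h i j).1 this

theorem cell_content {i c : ℤ} (h0 : 0 ≤ i) (h1 : -c ≤ i) :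
    (((cell i c).2 : ℤ) - (cell i c).1) = c := by
  simp only [cell]; omega

theorem IsRib.card {n : ℕ} {p : ℤ} {rho : YoungDiagram} {R : Finset Cell}
    (h : IsRib n p rho R) : R.card = n := by
  rw [h.eq_image, Finset.card_image_of_injective]
  · simp
  · intro c c' hcc
    have h1 := cell_content (bd_nonneg rho c) (neg_le_bd rho c)
    have h2 := cell_content (bd_nonneg rho c') (neg_le_bd rho c')
    simp only at hcc
    rw [hcc] at h1
    omega

theorem exists_bd_eq (rho : YoungDiagram) (a : ℤ) (m : ℕ) (r : ℤ) (h1 : bd rho (a + m) ≤ r)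
    (h2 : r ≤ bd rho a) : ∃ c, a ≤ c ∧ c ≤ a + m ∧ bd rho c = r := by
  induction m with
  | zero =>
    refine ⟨a, le_rfl, by simp, ?_⟩
    simp only [Nat.cast_zero, add_zero] at h1
    omega
  | succ m ih =>
    by_cases h : bd rho (a + m) ≤ r
    · obtain ⟨c, hc⟩ := ih h
      exact ⟨c, hc.1, by push_cast; omega, hc.2.2⟩
    · have := bd_le_succ rho (a + m)
      push_cast at h1 ⊢
      rw [← add_assoc] at h1
      exact ⟨a + m + 1, by omega, by omega, by omega⟩

/-- The spin of a ribbon along the boundary of `rho` is the number of beads it jumps over. -/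
theorem IsRib.spin {n : ℕ} (hn : 1 ≤ n) {p : ℤ} {rho : YoungDiagram} {R : Finset Cell}
    (h : IsRib n p rho R) : ribbonSpin R = sp n p rho := by
  have himg : R.image Prod.fst = Finset.Icc (bd rho (p + n)).toNat (bd rho (p + 1)).toNat := by
    ext r
    rw [h.eq_image, Finset.mem_image, Finset.mem_Icc]
    constructor
    · rintro ⟨x, hx, rfl⟩
      rw [Finset.mem_image] at hx
      obtain ⟨c, hc, rfl⟩ := hx
      rw [Finset.mem_Icc] at hc
      have := bd_anti rho hc.1
      have := bd_anti rho hc.2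
      simp only [cell]
      omega
    · rintro ⟨h1, h2⟩
      have := bd_nonneg rho (p + n)
      have := bd_nonneg rho (p + 1)
      obtain ⟨c, hc1, hc2, hc3⟩ := exists_bd_eq rho (p + 1) (n - 1) r
        (by rw [show p + 1 + ((n - 1 : ℕ) : ℤ) = p + n by omega]; omega) (by omega)
      refine ⟨cell (bd rho c) c, Finset.mem_image.2 ⟨c, Finset.mem_Icc.2 ⟨hc1, by omega⟩, rfl⟩, ?_⟩
      simp only [cell]
      omega
  have := bd_anti rho (show p + 1 ≤ p + n by omega)
  have := bd_nonneg rho (p + n)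
  rw [ribbonSpin, himg, Nat.card_Icc, sp]
  omega

theorem adj_symm {a b : Cell} (h : Adj a b) : Adj b a := by
  unfold Adj at *; omega

theorem IsRib.adj {n : ℕ} {p : ℤ} {rho : YoungDiagram} {R : Finset Cell}
    (_ : IsRib n p rho R) (c : ℤ) : Adj (cell (bd rho c) c) (cell (bd rho (c + 1)) (c + 1)) := by
  have := bd_succ_le rho c
  have := bd_le_succ rho c
  have := bd_nonneg rho (c + 1)
  have := neg_le_bd rho c
  have := neg_le_bd rho (c + 1)
  unfold Adj cell
  simp only
  omega

theorem Hop.isRibbon {n : ℕ} {p : ℤ} {mu lam : YoungDiagram} (h : Hop n p mu lam) :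
    IsRibbon n (lam.cells \ mu.cells) := by
  have hR := h.isRib
  refine ⟨hR.card, ?_, ?_, ⟨lam, mu, h.le, rfl⟩⟩
  · have key : ∀ (m : ℕ) (c : ℤ), p + 1 ≤ c → c + m ≤ p + n →
        Reach (lam.cells \ mu.cells) (cell (bd mu c) c) (cell (bd mu (c + m)) (c + m)) ∧
        Reach (lam.cells \ mu.cells) (cell (bd mu (c + m)) (c + m)) (cell (bd mu c) c) := by
      intro m c h1
      induction m with
      | zero => intro _; simp [Reach, Relation.ReflTransGen.refl]
      | succ m ih =>
        intro h2
        push_cast at h2 ⊢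
        rw [← add_assoc] at h2 ⊢
        obtain ⟨r1, r2⟩ := ih (by omega)
        refine ⟨r1.tail ⟨hR.cell_mem (by omega) (by omega), hR.adj _⟩,
          Relation.ReflTransGen.head ⟨hR.cell_mem (by omega) (by omega), adj_symm (hR.adj _)⟩ r2⟩
    intro a ha b hb
    rw [hR.eq_image, Finset.mem_image] at ha hb
    obtain ⟨c, hc, rfl⟩ := ha
    obtain ⟨d, hd, rfl⟩ := hb
    rw [Finset.mem_Icc] at hc hd
    rcases le_total c d with hcd | hcd
    · have := (key (d - c).toNat c hc.1 (by omega)).1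
      rwa [show c + ((d - c).toNat : ℤ) = d by omega] at this
    · have := (key (c - d).toNat d hd.1 (by omega)).2
      rwa [show d + ((c - d).toNat : ℤ) = c by omega] at this
  · rintro ⟨i, j, h1, -, -, h2⟩
    have e1 := (hR i j).1 h1
    have e2 := (hR (i + 1) (j + 1)).1 h2
    rw [show ((j + 1 : ℕ) : ℤ) - ((i + 1 : ℕ) : ℤ) = (j : ℤ) - i by push_cast; ring] at e2
    omega

/-- A path in `S` meets every content between those of its endpoints. -/
theorem reach_content {S : Finset Cell} {a b : Cell} (ha : a ∈ S) (h : Reach S a b) (c : ℤ)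
    (h1 : (a.2 : ℤ) - a.1 ≤ c) (h2 : c ≤ (b.2 : ℤ) - b.1) :
    ∃ d ∈ S, (d.2 : ℤ) - d.1 = c := by
  induction h with
  | refl => exact ⟨a, ha, by omega⟩
  | @tail x y hx hxy ih =>
    by_cases h3 : c ≤ (x.2 : ℤ) - x.1
    · exact ih h3
    · refine ⟨y, hxy.1, ?_⟩
      have := hxy.2
      unfold Adj at this
      omega

/-- A ribbon in the sense of connected skew shapes without `2 × 2` squares comes from a bead hop. -/
theorem exists_hop_of_isRibbon {n : ℕ} (hn : 1 ≤ n) {S : Finset Cell} (h : IsRibbon n S) :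
    ∃ p mu lam, Hop n p mu lam ∧ S = lam.cells \ mu.cells := by
  obtain ⟨hcard, hconn, hsq, lam, mu, hle, rfl⟩ := h
  set S := lam.cells \ mu.cells with hS
  have hle' := le_iff_bd.1 hle
  have hthin : ∀ c, bd lam c ≤ bd mu c + 1 := by
    intro c
    by_contra! hc
    apply hsq
    have b1 := bd_nonneg mu c
    have b2 := neg_le_bd mu c
    have l1 := bd_succ_le lam c
    have l2 := bd_le_succ lam c
    have m1 := bd_succ_le mu c
    have l3 := bd_succ_le lam (c - 1)
    have m2 := bd_le_succ mu (c - 1)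
    rw [sub_add_cancel] at l3 m2
    refine ⟨(bd mu c).toNat, (bd mu c + c).toNat, ?_, ?_, ?_, ?_⟩ <;> rw [mem_sdiff_iff]
    · rw [show (((bd mu c + c).toNat : ℤ) - (bd mu c).toNat) = c by omega]; omega
    · rw [show (((bd mu c + c).toNat : ℤ) - ((bd mu c).toNat + 1 : ℕ)) = c - 1 by omega]; omega
    · rw [show ((((bd mu c + c).toNat + 1 : ℕ) : ℤ) - (bd mu c).toNat) = c + 1 by omega]; omega
    · rw [show ((((bd mu c + c).toNat + 1 : ℕ) : ℤ) - ((bd mu c).toNat + 1 : ℕ)) = c by omega]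
      omega
  have hne : S.Nonempty := by
    rw [← Finset.card_pos]; omega
  obtain ⟨a, ha, hmin⟩ := Finset.exists_min_image S (fun x => (x.2 : ℤ) - x.1) hne
  obtain ⟨b, hb, hmax⟩ := Finset.exists_max_image S (fun x => (x.2 : ℤ) - x.1) hne
  have hab := hmin b hb
  set ca := (a.2 : ℤ) - a.1 with hca
  set cb := (b.2 : ℤ) - b.1 with hcb
  have hhop : Hop (cb - ca + 1).toNat (ca - 1) mu lam := by
    intro c
    split_ifs with hc
    · obtain ⟨⟨i, j⟩, hd, hdc⟩ := reach_content ha (hconn a ha b hb) c (by omega) (by omega)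
      have := (mem_sdiff_iff lam mu i j).1 hd
      simp only at hdc
      rw [hdc] at this
      have := hthin c
      omega
    · have h1 := hle' c
      by_contra hne
      have := (mem_sdiff_iff' lam mu (bd mu c) c (bd_nonneg _ _) (neg_le_bd _ _)).2
        ⟨by omega, le_rfl⟩
      have h2 := hmin _ this
      have h3 := hmax _ this
      have := bd_nonneg mu c
      have := neg_le_bd mu c
      simp only at h2 h3
      omega
  have hc' := hhop.isRib.card
  refine ⟨ca - 1, mu, lam, ?_, rfl⟩
  rwa [← hcard, hc']

theorem exists_isRib {n : ℕ} (hn : 1 ≤ n) {R : Finset Cell} (h : IsRibbon n R) :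
    ∃ p rho, IsRib n p rho R := by
  obtain ⟨p, mu, lam, hh, rfl⟩ := exists_hop_of_isRibbon hn h
  exact ⟨p, mu, hh.isRib⟩

theorem IsRib.tail_unique {n : ℕ} (hn : 1 ≤ n) {p p' : ℤ} {rho rho' : YoungDiagram}
    {R : Finset Cell} (h : IsRib n p rho R) (h' : IsRib n p' rho' R) : p = p' := by
  have h1 := (h'.cell_mem_iff (bd_nonneg _ _) (neg_le_bd _ _)).1
    (h.cell_mem (c := p + 1) le_rfl (by omega))
  have h2 := (h.cell_mem_iff (bd_nonneg _ _) (neg_le_bd _ _)).1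
    (h'.cell_mem (c := p' + 1) le_rfl (by omega))
  omega

/-- The content just before the lowest content of the `n`-ribbon `R` (junk value `0` if `R` is not
an `n`-ribbon). -/
noncomputable def tl (n : ℕ) (R : Finset Cell) : ℤ :=
  if h : ∃ p rho, IsRib n p rho R then h.choose else 0

theorem IsRib.tl_eq {n : ℕ} (hn : 1 ≤ n) {p : ℤ} {rho : YoungDiagram}
    {R : Finset Cell} (h : IsRib n p rho R) : tl n R = p := by
  have hex : ∃ p rho, IsRib n p rho R := ⟨p, rho, h⟩
  rw [tl, dif_pos hex]
  exact hex.choose_spec.choose_spec.tail_unique hn h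

theorem IsRib.topRight {n : ℕ} (hn : 1 ≤ n) {p : ℤ} {rho : YoungDiagram}
    {R : Finset Cell} (h : IsRib n p rho R) (x : Cell) :
    TopRightCell R x ↔ x = cell (bd rho (p + n)) (p + n) := by
  have hb := bd_nonneg rho (p + n)
  have hb' := neg_le_bd rho (p + n)
  have head : TopRightCell R (cell (bd rho (p + n)) (p + n)) := by
    refine ⟨h.cell_mem (by omega) le_rfl, ?_⟩
    rintro ⟨i, j⟩ hd
    obtain ⟨h1, h2, h3⟩ := (h i j).1 hd
    have := bd_lip rho h2
    simp only [cell]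
    omega
  constructor
  · intro hx
    have h1 := hx.2 _ head.1
    have h2 := head.2 _ hx.1
    exact Prod.ext (by omega) (by omega)
  · rintro rfl
    exact head

/-- For a ribbon inside `lam / mu`, the northern condition says that its head lies on the
boundary of `mu`, at a content where the boundary of `mu` has a horizontal step. -/
theorem IsRib.north {n : ℕ} (hn : 1 ≤ n) {p : ℤ} {rho mu lam : YoungDiagram}
    {R : Finset Cell} (h : IsRib n p rho R) (hR : R ⊆ lam.cells \ mu.cells) :
    (∀ c : Cell, TopRightCell R c → (c.1 = 0 ∨ (c.1 - 1, c.2) ∉ lam.cells \ mu.cells)) ↔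
      bd rho (p + n) ≤ bd mu (p + n + 1) := by
  have hb := bd_nonneg rho (p + n)
  have hb' := neg_le_bd rho (p + n)
  have hm0 := bd_nonneg mu (p + n + 1)
  have hm := (mem_sdiff_iff' lam mu _ _ hb hb').1 (hR (h.cell_mem (c := p + n) (by omega) le_rfl))
  have hl := bd_le_succ lam (p + n)
  have : (∀ c : Cell, TopRightCell R c → (c.1 = 0 ∨ (c.1 - 1, c.2) ∉ lam.cells \ mu.cells)) ↔
      ((cell (bd rho (p + n)) (p + n)).1 = 0 ∨ ((cell (bd rho (p + n)) (p + n)).1 - 1,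
        (cell (bd rho (p + n)) (p + n)).2) ∉ lam.cells \ mu.cells) := by
    constructor
    · intro hc; exact hc _ ((h.topRight hn _).2 rfl)
    · intro hc c hc'
      rw [(h.topRight hn c).1 hc']
      exact hc
  rw [this]
  simp only [cell]
  by_cases h0 : (bd rho (p + n)) = 0
  · rw [h0]; simp [hm0]
  · rw [mem_sdiff_iff, show (((bd rho (p + n) + (p + n)).toNat : ℤ) -
      ((bd rho (p + n)).toNat - 1 : ℕ)) = p + n + 1 by omega]
    omega

/-! ### Horizontal ribbon strips -/

theorem isTilingOf_erase {n : ℕ} {S : Finset Cell} {T : Finset (Finset Cell)} {R : Finset Cell}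
    (h : IsTilingOf n S T) (hR : R ∈ T) : IsTilingOf n (S \ R) (T.erase R) := by
  refine ⟨fun R' h' => h.1 R' (Finset.mem_of_mem_erase h'), fun A hA B hB hAB =>
    h.2.1 (Finset.mem_of_mem_erase hA) (Finset.mem_of_mem_erase hB) hAB, ?_⟩
  rw [← h.2.2]
  ext x
  simp only [Finset.mem_biUnion, Finset.mem_erase, Finset.mem_sdiff, id]
  constructor
  · rintro ⟨R', ⟨hne, hR'⟩, hx⟩
    exact ⟨⟨R', hR', hx⟩, fun hx' => Finset.disjoint_left.1 (h.2.1 hR' hR hne) hx hx'⟩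
  · rintro ⟨⟨R', hR', hx⟩, hx'⟩
    exact ⟨R', ⟨fun e => hx' (e ▸ hx), hR'⟩, hx⟩

theorem isTilingOf_insert {n : ℕ} {S : Finset Cell} {T : Finset (Finset Cell)} {R : Finset Cell}
    (h : IsTilingOf n S T) (hR : IsRibbon n R) (hd : Disjoint R S) :
    IsTilingOf n (R ∪ S) (insert R T) := by
  refine ⟨?_, ?_, ?_⟩
  · intro R' h'
    rcases Finset.mem_insert.1 h' with rfl | h'
    · exact hR
    · exact h.1 R' h'
  · have hsub : ∀ B ∈ T, Disjoint R B := fun B hB =>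
      Finset.disjoint_of_subset_right
        (by rw [← h.2.2]; exact Finset.subset_biUnion_of_mem id hB) hd
    intro A hA B hB hAB
    rcases Finset.mem_insert.1 hA with hA' | hA' <;>
      rcases Finset.mem_insert.1 hB with hB' | hB'
    · exact absurd (hA'.trans hB'.symm) hAB
    · exact hA' ▸ hsub B hB'
    · exact hB' ▸ (hsub A hA').symm
    · exact h.2.1 hA' hB' hAB
  · rw [Finset.biUnion_insert, h.2.2]; rfl

/-- `T` is the tiling of the horizontal `n`-ribbon strip `lam / mu`, the northern condition being
expressed by the boundary function of `mu`. -/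
def HT (n : ℕ) (mu lam : YoungDiagram) (T : Finset (Finset Cell)) : Prop :=
  mu ≤ lam ∧ IsTilingOf n (lam.cells \ mu.cells) T ∧
    ∀ R ∈ T, ∀ p rho, IsRib n p rho R → bd rho (p + n) ≤ bd mu (p + n + 1)

section

variable {n : ℕ} {mu lam : YoungDiagram} {T : Finset (Finset Cell)}

theorem tiling_sub {S R : Finset Cell} (h : IsTilingOf n S T) (hR : R ∈ T) : R ⊆ S := by
  rw [← h.2.2]; exact Finset.subset_biUnion_of_mem id hR

theorem HT_iff (hn : 1 ≤ n) (hle : mu ≤ lam) :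
    HT n mu lam T ↔ IsHStripTiling n (lam.cells \ mu.cells) T := by
  constructor
  · rintro ⟨-, h1, h2⟩
    refine ⟨h1, fun R hR => ?_⟩
    obtain ⟨p, rho, hr⟩ := exists_isRib hn (h1.1 R hR)
    exact (hr.north hn (tiling_sub h1 hR)).2 (h2 R hR p rho hr)
  · rintro ⟨h1, h2⟩
    exact ⟨hle, h1, fun R hR p rho hr => (hr.north hn (tiling_sub h1 hR)).1 (h2 R hR)⟩

theorem HT.rib (hn : 1 ≤ n) (h : HT n mu lam T) {R : Finset Cell} (hR : R ∈ T) :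
    ∃ rho, IsRib n (tl n R) rho R := by
  obtain ⟨p, rho, hr⟩ := exists_isRib hn (h.2.1.1 R hR)
  rw [hr.tl_eq hn]
  exact ⟨rho, hr⟩

theorem HT.cov (hn : 1 ≤ n) (h : HT n mu lam T) {i c : ℤ} (h1 : bd mu c ≤ i) (h2 : i < bd lam c) :
    ∃ R ∈ T, ∃ p rho, IsRib n p rho R ∧ p + 1 ≤ c ∧ c ≤ p + n ∧ i = bd rho c := by
  have b1 := bd_nonneg mu c
  have b2 := neg_le_bd mu c
  have hm := (mem_sdiff_iff' lam mu i c (by omega) (by omega)).2 ⟨h2, h1⟩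
  rw [← h.2.1.2.2, Finset.mem_biUnion] at hm
  obtain ⟨R, hR, hm⟩ := hm
  obtain ⟨p, rho, hr⟩ := exists_isRib hn (h.2.1.1 R hR)
  exact ⟨R, hR, p, rho, hr, (hr.cell_mem_iff (by omega) (by omega)).1 hm⟩

theorem HT.between (h : HT n mu lam T) {R : Finset Cell} (hR : R ∈ T) {p : ℤ}
    {rho : YoungDiagram} (hr : IsRib n p rho R) {c : ℤ} (h1 : p + 1 ≤ c) (h2 : c ≤ p + n) :
    bd mu c ≤ bd rho c ∧ bd rho c < bd lam c := by
  have := (mem_sdiff_iff' lam mu (bd rho c) c (bd_nonneg _ _) (neg_le_bd _ _)).1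
    (tiling_sub h.2.1 hR (hr.cell_mem h1 h2))
  exact this.symm

theorem HT.eq_of_common (h : HT n mu lam T) {R R' : Finset Cell} (hR : R ∈ T) (hR' : R' ∈ T)
    {p p' : ℤ} {rho rho' : YoungDiagram} (hr : IsRib n p rho R) (hr' : IsRib n p' rho' R') {c : ℤ}
    (h1 : p + 1 ≤ c) (h2 : c ≤ p + n) (h1' : p' + 1 ≤ c) (h2' : c ≤ p' + n)
    (he : bd rho c = bd rho' c) : R = R' := by
  by_contra hne
  have m := hr.cell_mem h1 h2
  rw [he] at m
  exact Finset.disjoint_left.1 (h.2.1.2.1 hR hR' hne) m (hr'.cell_mem h1' h2')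

/-- The head of a ribbon of a horizontal strip sits on the boundary of the inner shape. -/
theorem HT.head (hn : 1 ≤ n) (h : HT n mu lam T) {R : Finset Cell} (hR : R ∈ T) {p : ℤ}
    {rho : YoungDiagram} (hr : IsRib n p rho R) :
    bd rho (p + n) = bd mu (p + n) ∧ bd mu (p + n) = bd mu (p + n + 1) := by
  have h1 := h.between hR hr (c := p + n) (by omega) le_rfl
  have h2 := h.2.2 R hR p rho hr
  have h3 := bd_succ_le mu (p + n)
  omega

/-- In a horizontal strip, the outer boundary does not step down just before a cell of the
ribbon `R` with a gap to `R`. -/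
theorem HT.no_gap (hn : 1 ≤ n) (h : HT n mu lam T) {R : Finset Cell} (hR : R ∈ T) {p : ℤ}
    {rho : YoungDiagram} (hr : IsRib n p rho R) {c : ℤ} (h1 : p + 1 ≤ c) (h2 : c ≤ p + n)
    (hc : bd rho c = bd lam c - 1) (hl : bd lam (c - 1) = bd lam c + 1)
    (hgap : p + 1 ≤ c - 1 → bd rho (c - 1) ≠ bd lam c) : False := by
  have m1 := bd_le_succ mu (c - 1)
  rw [sub_add_cancel] at m1
  have m2 := h.between hR hr h1 h2
  obtain ⟨R', hR', p', rho', hr', a1, a2, a3⟩ :=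
    h.cov hn (i := bd lam c) (c := c - 1) (by omega) (by omega)
  by_cases hh : p' + n = c - 1
  · have := h.2.2 R' hR' p' rho' hr'
    rw [hh, sub_add_cancel] at this
    omega
  · have m3 := h.between hR' hr' (c := c) (by omega) (by omega)
    have m4 := bd_le_succ rho' (c - 1)
    rw [sub_add_cancel] at m4
    obtain rfl := h.eq_of_common hR hR' hr hr' h1 h2 (by omega) (by omega) (by omega)
    obtain rfl := hr.tail_unique hn hr'
    have := (hr.cell_mem_iff (bd_nonneg _ _) (neg_le_bd _ _)).1 (hr'.cell_mem a1 a2)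
    exact hgap a1 (by omega)

/-- The ribbon of largest tail can be removed from a horizontal strip. -/
theorem HT.peel (hn : 1 ≤ n) (h : HT n mu lam T) {R : Finset Cell} (hR : R ∈ T)
    (hmax : ∀ R' ∈ T, tl n R' ≤ tl n R) :
    ∃ lam', Hop n (tl n R) lam' lam ∧ R = lam.cells \ lam'.cells ∧ HT n mu lam' (T.erase R) ∧
      (∀ R' ∈ T.erase R, tl n R' < tl n R) ∧ bd mu (tl n R + n) < bd lam (tl n R + n) ∧
      ∀ c, tl n R + n < c → bd lam c = bd mu c := by
  obtain ⟨rho, hr⟩ := h.rib hn hR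
  set p := tl n R with hp
  have hle := le_iff_bd.1 h.1
  have hhead := h.head hn hR hr
  have hbeyond : ∀ c, p + n < c → bd lam c = bd mu c := by
    intro c hc
    by_contra hne
    obtain ⟨R', hR', p', rho', hr', a1, a2, a3⟩ :=
      h.cov hn (i := bd mu c) (c := c) le_rfl (by have := hle c; omega)
    have := hmax R' hR'
    rw [hr'.tl_eq hn] at this
    omega
  have hb := hbeyond (p + n + 1) (by omega)
  have hlam := bd_le_succ lam (p + n)
  have hbt := h.between hR hr (c := p + n) (by omega) le_rfl
  have hwin : ∀ t : ℕ, t < n → bd rho (p + n - t) = bd lam (p + n - t) - 1 := by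
    intro t
    induction t with
    | zero => intro _; simp only [Nat.cast_zero, sub_zero]; omega
    | succ t ih =>
      intro ht
      have ih := ih (by omega)
      push_cast
      rw [show p + n - ((t : ℤ) + 1) = p + n - t - 1 by ring]
      set c := p + n - (t : ℤ) with hc
      have r1 := bd_succ_le rho (c - 1)
      have r2 := bd_le_succ rho (c - 1)
      have l1 := bd_succ_le lam (c - 1)
      have l2 := bd_le_succ lam (c - 1)
      rw [sub_add_cancel] at r1 r2 l1 l2
      have hbt := h.between hR hr (c := c - 1) (by omega) (by omega)
      by_contra hne
      exact h.no_gap hn hR hr (c := c) (by omega) (by omega) ih (by omega) (by omega)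
  have hwin' : ∀ c, p + 1 ≤ c → c ≤ p + n → bd rho c = bd lam c - 1 := by
    intro c h1 h2
    have := hwin (p + n - c).toNat (by omega)
    rwa [show p + n - ((p + n - c).toNat : ℤ) = c by omega] at this
  have hend : bd lam p = bd lam (p + 1) := by
    have l1 := bd_succ_le lam p
    have l2 := bd_le_succ lam p
    by_contra hne
    exact h.no_gap hn hR hr (c := p + 1) (by omega) (by omega) (hwin' _ (by omega) (by omega))
      (by rw [add_sub_cancel_right]; omega) (by omega)
  obtain ⟨lam', hop⟩ := (exists_hop_left hn).2 ⟨hend, by omega⟩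
  have hRe : R = lam.cells \ lam'.cells := by
    ext ⟨i, j⟩
    rw [hr, hop.isRib]
    refine and_congr_right fun h1 => and_congr_right fun h2 => ?_
    have := hwin' _ h1 h2
    have := hop.at ((j : ℤ) - i)
    omega
  have hle' : mu ≤ lam' := by
    rw [le_iff_bd]
    intro c
    have := hop.at c
    have := hle c
    by_cases hc : p + 1 ≤ c ∧ c ≤ p + n
    · have := h.between hR hr hc.1 hc.2
      have := hwin' c hc.1 hc.2
      omega
    · omega
  refine ⟨lam', hop, hRe, ⟨hle', ?_, ?_⟩, ?_, by omega, hbeyond⟩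
  · have := isTilingOf_erase h.2.1 hR
    have e : (lam.cells \ mu.cells) \ R = lam'.cells \ mu.cells := by
      have : lam'.cells ⊆ lam.cells := hop.le
      rw [hRe]
      ext x
      simp only [Finset.mem_sdiff]
      have := @this x
      tauto
    rwa [e] at this
  · intro R' hR'
    exact h.2.2 R' (Finset.mem_of_mem_erase hR')
  · intro R' hR'
    obtain ⟨hne, hR'⟩ := Finset.mem_erase.1 hR'
    obtain ⟨rho', hr'⟩ := h.rib hn hR'
    refine lt_of_le_of_ne (hmax R' hR') fun he => hne ?_
    rw [he] at hr'
    have := h.head hn hR' hr'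
    exact h.eq_of_common hR' hR hr' hr (c := p + n) (by omega) le_rfl (by omega) le_rfl (by omega)

/-- A ribbon whose tail exceeds all tails of a horizontal strip can be added to the strip. -/
theorem HT.add (hn : 1 ≤ n) {lam' : YoungDiagram} (h : HT n mu lam' T) {p : ℤ}
    (hT : ∀ R ∈ T, tl n R < p) (hop : Hop n p lam' lam) :
    HT n mu lam (insert (lam.cells \ lam'.cells) T) ∧ (lam.cells \ lam'.cells) ∉ T := by
  have hs1 : mu.cells ⊆ lam'.cells := h.1
  have hs2 : lam'.cells ⊆ lam.cells := hop.le
  refine ⟨⟨h.1.trans hop.le, ?_, ?_⟩, ?_⟩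
  · have hd : Disjoint (lam.cells \ lam'.cells) (lam'.cells \ mu.cells) := by
      rw [Finset.disjoint_left]
      intro x hx hx'
      exact (Finset.mem_sdiff.1 hx).2 (Finset.mem_sdiff.1 hx').1
    have := isTilingOf_insert h.2.1 hop.isRibbon hd
    have e : (lam.cells \ lam'.cells) ∪ (lam'.cells \ mu.cells) = lam.cells \ mu.cells := by
      ext x
      simp only [Finset.mem_sdiff, Finset.mem_union]
      have := @hs1 x
      have := @hs2 x
      tauto
    rwa [e] at this
  · intro R hR p' rho hr
    rcases Finset.mem_insert.1 hR with rfl | hR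
    · obtain rfl := hr.tail_unique hn hop.isRib
      have e := (hop.isRib.cell_mem_iff (bd_nonneg _ _) (neg_le_bd _ _)).1
        (hr.cell_mem (c := p' + n) (by omega) le_rfl)
      have e2 := ((exists_hop_right hn).1 ⟨_, hop⟩).2
      rw [e.2.2, e2]
      by_contra! hlt
      obtain ⟨R', hR', p'', rho', hr', a1, a2, a3⟩ :=
        h.cov hn (i := bd mu (p' + n + 1)) (c := p' + n + 1) le_rfl hlt
      have := hT R' hR'
      rw [hr'.tl_eq hn] at this
      omega
    · exact h.2.2 R hR p' rho hr
  · intro hm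
    have := hT _ hm
    rw [hop.isRib.tl_eq hn] at this
    omega

theorem HT_empty (n : ℕ) (mu : YoungDiagram) : HT n mu mu ∅ :=
  ⟨le_rfl, ⟨by simp, by simp, by simp⟩, by simp⟩

theorem HT.eq_of_empty (h : HT n mu lam ∅) : lam = mu := by
  have := h.2.1.2.2
  rw [Finset.biUnion_empty, eq_comm, Finset.sdiff_eq_empty_iff_subset] at this
  exact le_antisymm this h.1

/-- A horizontal strip is empty or arises by adding a ribbon of maximal tail. -/
theorem HT.cases (hn : 1 ≤ n) (h : HT n mu lam T) :
    (T = ∅ ∧ lam = mu) ∨ ∃ p lam' T', Hop n p lam' lam ∧ HT n mu lam' T' ∧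
      (∀ R ∈ T', tl n R < p) ∧ T = insert (lam.cells \ lam'.cells) T' ∧
      (lam.cells \ lam'.cells) ∉ T' ∧ tl n (lam.cells \ lam'.cells) = p ∧
      bd mu (p + n) < bd lam (p + n) ∧ ∀ c, p + n < c → bd lam c = bd mu c := by
  rcases T.eq_empty_or_nonempty with rfl | hne
  · exact Or.inl ⟨rfl, h.eq_of_empty⟩
  · right
    obtain ⟨R, hR, hmax⟩ := Finset.exists_max_image T (tl n) hne
    obtain ⟨lam', h1, h2, h3, h4, h5, h6⟩ := h.peel hn hR hmax
    refine ⟨tl n R, lam', T.erase R, h1, h3, h4, ?_, ?_, ?_, h5, h6⟩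
    · rw [← h2, Finset.insert_erase hR]
    · rw [← h2]; simp
    · rw [← h2]

/-- A horizontal strip has only one tiling. -/
theorem HT.unique (hn : 1 ≤ n) {T' : Finset (Finset Cell)} (h : HT n mu lam T)
    (h' : HT n mu lam T') : T = T' := by
  induction hc : T.card generalizing lam T T' with
  | zero =>
    rw [Finset.card_eq_zero] at hc
    subst hc
    obtain rfl := h.eq_of_empty
    rcases h'.cases hn with ⟨rfl, -⟩ | ⟨p, lam', T', -, -, -, -, -, -, hlt, -⟩
    · rfl
    · omega
  | succ k ih =>
    rcases h.cases hn with ⟨rfl, -⟩ | ⟨p, lam1, T1, hop, h1, h2, rfl, h4, h5, hlt, hgt⟩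
    · simp at hc
    rcases h'.cases hn with ⟨rfl, rfl⟩ |
      ⟨p', lam1', T1', hop', h1', h2', rfl, h4', h5', hlt', hgt'⟩
    · omega
    have hp : p = p' := by
      rcases lt_trichotomy p p' with hpp | hpp | hpp
      · have := hgt (p' + n) (by omega); omega
      · exact hpp
      · have := hgt' (p + n) (by omega); omega
    subst hp
    obtain rfl := hop.left_unique hop'
    rw [Finset.card_insert_of_notMem h4] at hc
    rw [ih h1 h1' (by omega)]

theorem HT.card (h : HT n mu lam T) : lam.card = mu.card + n * T.card := by
  have h1 : (lam.cells \ mu.cells).card = n * T.card := by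
    rw [← h.2.1.2.2, Finset.card_biUnion (t := id) (fun A hA B hB hAB => h.2.1.2.1 hA hB hAB),
      Finset.sum_congr rfl (f := fun u => (id u).card) (g := fun _ => n)
        (fun R hR => (h.2.1.1 R hR).1)]
    simp [mul_comm]
  have h2 : mu.cells ⊆ lam.cells := h.1
  rw [Finset.card_sdiff_of_subset h2] at h1
  have := Finset.card_le_card h2
  simp only [YoungDiagram.card]
  omega

theorem HT.tl_ge (hn : 1 ≤ n) (h : HT n mu lam T) {L : ℤ} (hL : Bounded L mu) {R : Finset Cell}
    (hR : R ∈ T) : -L - n ≤ tl n R := by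
  obtain ⟨rho, hr⟩ := h.rib hn hR
  have := (h.head hn hR hr).2
  by_contra! hlt
  rw [hL.2.2 _ (by omega), hL.2.2 _ (by omega)] at this
  omega

theorem HT.tl_ge' (hn : 1 ≤ n) (h : HT n mu lam T) {L : ℤ} (hL : Bounded L lam) {R : Finset Cell}
    (hR : R ∈ T) : -L ≤ tl n R := by
  obtain ⟨rho, hr⟩ := h.rib hn hR
  have := h.between hR hr (c := tl n R + 1) le_rfl (by omega)
  by_contra! hlt
  rw [hL.2.2 _ (by omega)] at this
  have := neg_le_bd mu (tl n R + 1)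
  omega

theorem HT.tl_lt (hn : 1 ≤ n) (h : HT n mu lam T) {L : ℤ} (hL : ∀ c, L ≤ c → bd lam c = 0)
    {R : Finset Cell} (hR : R ∈ T) : tl n R + n < L := by
  obtain ⟨rho, hr⟩ := h.rib hn hR
  have := h.between hR hr (c := tl n R + n) (by omega) le_rfl
  by_contra! hlt
  rw [hL _ (by omega)] at this
  have := bd_nonneg mu (tl n R + n)
  omega

theorem HT.bd_eq (hn : 1 ≤ n) (h : HT n mu lam T) {L : ℤ} (hL : Bounded L mu) {c : ℤ}
    (hc : c ≤ -L - n) : bd lam c = bd mu c := by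
  have hle := le_iff_bd.1 h.1 c
  by_contra hne
  obtain ⟨R', hR', p', rho', hr', a1, a2, a3⟩ :=
    h.cov hn (i := bd mu c) (c := c) le_rfl (by omega)
  have := h.tl_ge hn hL hR'
  rw [hr'.tl_eq hn] at this
  omega

end

/-- The sum over the (at most one) tilings of the horizontal strip `lam / mu` all of whose tails
satisfy `P`, of the product of the weights `w (spin R)` of the ribbons `R`. -/
noncomputable def HW {A : Type*} [CommRing A] (n : ℕ) (w : ℕ → A) (P : ℤ → Prop)
    (mu lam : YoungDiagram) : A :=
  if h : ∃ T, HT n mu lam T ∧ ∀ R ∈ T, P (tl n R) then ∏ R ∈ h.choose, w (ribbonSpin R) else 0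

section

variable {A : Type*} [CommRing A] {n : ℕ} {w : ℕ → A} {P : ℤ → Prop} {mu lam : YoungDiagram}

theorem HW_eq (hn : 1 ≤ n) {T : Finset (Finset Cell)} (h : HT n mu lam T)
    (hP : ∀ R ∈ T, P (tl n R)) : HW n w P mu lam = ∏ R ∈ T, w (ribbonSpin R) := by
  have hex : ∃ T, HT n mu lam T ∧ ∀ R ∈ T, P (tl n R) := ⟨T, h, hP⟩
  rw [HW, dif_pos hex, hex.choose_spec.1.unique hn h]

theorem HW_zero (h : ∀ T, HT n mu lam T → ¬ ∀ R ∈ T, P (tl n R)) : HW n w P mu lam = 0 := by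
  rw [HW, dif_neg]
  rintro ⟨T, h1, h2⟩
  exact h T h1 h2

theorem exists_of_HW_ne_zero (h : HW n w P mu lam ≠ 0) :
    ∃ T, HT n mu lam T ∧ ∀ R ∈ T, P (tl n R) := by
  by_contra hne
  rw [HW, dif_neg hne] at h
  exact h rfl

theorem HW_congr {P' : ℤ → Prop}
    (h : ∀ T, HT n mu lam T → ((∀ R ∈ T, P (tl n R)) ↔ ∀ R ∈ T, P' (tl n R))) :
    HW n w P mu lam = HW n w P' mu lam := by
  have : (fun T => HT n mu lam T ∧ ∀ R ∈ T, P (tl n R)) =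
      (fun T => HT n mu lam T ∧ ∀ R ∈ T, P' (tl n R)) := by
    funext T
    exact propext (and_congr_right fun hT => h T hT)
  unfold HW
  simp only [this]

theorem HW_base (hn : 1 ≤ n) (h : ∀ T, HT n mu lam T → ∀ R ∈ T, ¬ P (tl n R)) :
    HW n w P mu lam = if lam = mu then 1 else 0 := by
  split_ifs with he
  · subst he
    rw [HW_eq hn (HT_empty n lam) (by simp), Finset.prod_empty]
  · apply HW_zero
    intro T hT hP
    rcases T.eq_empty_or_nonempty with rfl | ⟨R, hR⟩
    · exact he hT.eq_of_empty
    · exact h T hT R hR (hP R hR)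

theorem HW_succ_of_hop (hn : 1 ≤ n) {b : ℤ} {lam' : YoungDiagram} (hop : Hop n b lam' lam) :
    HW n w (· < b + 1) mu lam =
      HW n w (· < b) mu lam + w (sp n b lam) * HW n w (· < b) mu lam' := by
  by_cases h : ∃ T, HT n mu lam' T ∧ ∀ R ∈ T, tl n R < b
  · obtain ⟨T, hT, hb⟩ := h
    obtain ⟨h1, h2⟩ := hT.add hn hb hop
    have htl := hop.isRib.tl_eq hn
    rw [HW_eq hn h1, HW_eq hn hT hb, HW_zero, Finset.prod_insert h2, hop.isRib.spin hn,
      hop.sp_eq hn, zero_add]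
    · intro T' hT' hb'
      obtain rfl := hT'.unique hn h1
      have := hb' _ (Finset.mem_insert_self _ _)
      omega
    · intro R hR
      rcases Finset.mem_insert.1 hR with rfl | hR
      · omega
      · have := hb R hR; omega
  · have h' : HW n w (· < b) mu lam' = 0 := HW_zero fun T h1 h2 => h ⟨T, h1, h2⟩
    rw [h', mul_zero, add_zero]
    apply HW_congr
    intro T hT
    refine ⟨fun hb => ?_, fun hb R hR => by have := hb R hR; omega⟩
    rcases hT.cases hn with ⟨rfl, -⟩ | ⟨p, lam1, T1, hop1, g1, g2, rfl, g4, g5, -, -⟩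
    · simp
    · intro R hR
      have hp := hb _ (Finset.mem_insert_self _ _)
      by_cases hpb : p = b
      · subst hpb
        obtain rfl := hop.left_unique hop1
        exact absurd ⟨T1, g1, g2⟩ h
      · rcases Finset.mem_insert.1 hR with rfl | hR
        · omega
        · have := g2 R hR; omega

theorem HW_succ_of_not (hn : 1 ≤ n) {b : ℤ} (hop : ¬ ∃ lam', Hop n b lam' lam) :
    HW n w (· < b + 1) mu lam = HW n w (· < b) mu lam := by
  apply HW_congr
  intro T hT
  refine ⟨fun hb => ?_, fun hb R hR => by have := hb R hR; omega⟩
  rcases hT.cases hn with ⟨rfl, -⟩ | ⟨p, lam1, T1, hop1, g1, g2, rfl, g4, g5, -, -⟩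
  · simp
  · intro R hR
    have hp := hb _ (Finset.mem_insert_self _ _)
    by_cases hpb : p = b
    · subst hpb
      exact absurd ⟨_, hop1⟩ hop
    · rcases Finset.mem_insert.1 hR with rfl | hR
      · omega
      · have := g2 R hR; omega

end

/-! ### Strips as matrix coefficients of operator products -/

section

variable {A : Type*} [CommRing A] {n : ℕ}

open Finsupp in
theorem up_apply_of_hop {q : A} {p : ℤ} {mu mu' : YoungDiagram} (h : Hop n p mu' mu)
    (f : YoungDiagram →₀ A) : up n q p f mu = f mu' * q ^ sp n p mu' := by
  induction f using Finsupp.induction_linear with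
  | zero => simp
  | add f g hf hg => rw [map_add, Finsupp.add_apply, hf, hg, Finsupp.add_apply, add_mul]
  | single a b =>
    by_cases hex : ∃ lam', Hop n p a lam'
    · obtain ⟨lam', h'⟩ := hex
      rw [up_of_hop h']
      by_cases ha : a = mu'
      · subst ha
        rw [h'.right_unique h]; simp
      · rw [single_eq_of_ne, single_eq_of_ne, zero_mul]
        · exact fun e => ha e.symm
        · rintro rfl
          exact ha (h'.left_unique h)
    · rw [up_of_not hex]
      have : mu' ≠ a := by rintro rfl; exact hex ⟨_, h⟩
      rw [single_eq_of_ne this]; simp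

open Finsupp in
theorem up_apply_of_not {q : A} {p : ℤ} {mu : YoungDiagram} (h : ¬ ∃ mu', Hop n p mu' mu)
    (f : YoungDiagram →₀ A) : up n q p f mu = 0 := by
  induction f using Finsupp.induction_linear with
  | zero => simp
  | add f g hf hg => rw [map_add, Finsupp.add_apply, hf, hg, add_zero]
  | single a b =>
    by_cases hex : ∃ lam', Hop n p a lam'
    · obtain ⟨lam', h'⟩ := hex
      rw [up_of_hop h', single_eq_of_ne]
      rintro rfl
      exact h ⟨_, h'⟩
    · rw [up_of_not hex]; simp

theorem end_single (f : Module.End A (YoungDiagram →₀ A)) (lam : YoungDiagram) (r : A) :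
    f (Finsupp.single lam r) = r • f (Finsupp.single lam 1) := by
  rw [← map_smul, Finsupp.smul_single, smul_eq_mul, mul_one]

/-- The coefficients of the product of removing operators enumerate horizontal strips. -/
theorem coefD (hn : 1 ≤ n) (q x : A) (a : ℤ) (m : ℕ) {lam sig : YoungDiagram}
    (hbase : ∀ lam' ≤ lam, HW n (fun s => x * q ^ s) (· < a) sig lam' =
      if lam' = sig then 1 else 0) :
    Dop n q x a m (Finsupp.single lam 1) sig = HW n (fun s => x * q ^ s) (· < a + m) sig lam := by
  induction m generalizing lam with
  | zero =>
    simp only [Dop, Nat.cast_zero, add_zero, Module.End.one_apply]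
    rw [hbase lam le_rfl, Finsupp.single_apply]
  | succ m ih =>
    rw [Dop, Module.End.mul_apply, LinearMap.add_apply, Module.End.one_apply,
      LinearMap.smul_apply, map_add, map_smul, Finsupp.add_apply, Finsupp.smul_apply, smul_eq_mul,
      ih hbase]
    push_cast
    rw [← add_assoc]
    by_cases hop : ∃ lam', Hop n (a + m) lam' lam
    · obtain ⟨lam', hop⟩ := hop
      rw [HW_succ_of_hop hn hop, dn_of_hop hop, end_single, Finsupp.smul_apply, smul_eq_mul,
        ih (fun l hl => hbase l (hl.trans hop.le))]
      ring
    · rw [HW_succ_of_not hn hop, dn_of_not hop]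
      simp

/-- The coefficients of the product of adding operators enumerate vertical strips. -/
theorem coefV (hn : 1 ≤ n) (q y : A) (a : ℤ) (m : ℕ) {lam mu : YoungDiagram}
    (hbase : ∀ mu' ≤ mu, HW n (fun s => y * q ^ (n - 1 - s)) (· < -(a + m) - n)
      lam.transpose mu'.transpose = if mu' = lam then 1 else 0) :
    Vop n q y a m (Finsupp.single lam 1) mu =
      HW n (fun s => y * q ^ (n - 1 - s)) (· < -a - n) lam.transpose mu.transpose := by
  induction m generalizing a mu with
  | zero =>
    simp only [Nat.cast_zero, add_zero] at hbase
    rw [Vop, Module.End.one_apply, hbase mu le_rfl, Finsupp.single_apply]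
    exact if_congr eq_comm rfl rfl
  | succ m ih =>
    have hb : ∀ mu' ≤ mu, HW n (fun s => y * q ^ (n - 1 - s)) (· < -(a + 1 + m) - n)
        lam.transpose mu'.transpose = if mu' = lam then 1 else 0 := by
      intro mu' h
      rw [← hbase mu' h]
      push_cast
      rw [show a + 1 + (m : ℤ) = a + (m + 1) by ring]
    rw [Vop_succ', Module.End.mul_apply, LinearMap.add_apply, Module.End.one_apply,
      LinearMap.smul_apply, Finsupp.add_apply, Finsupp.smul_apply, smul_eq_mul, ih (a + 1) hb,
      show -(a + 1) - (n : ℤ) = -a - n - 1 by ring]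
    have e : HW n (fun s => y * q ^ (n - 1 - s)) (· < -a - n) lam.transpose mu.transpose =
        HW n (fun s => y * q ^ (n - 1 - s)) (· < -a - n - 1 + 1) lam.transpose mu.transpose := by
      rw [sub_add_cancel]
    rw [e]
    by_cases hop : ∃ mu', Hop n a mu' mu
    · obtain ⟨mu', hop⟩ := hop
      rw [HW_succ_of_hop hn hop.transpose, up_apply_of_hop hop,
        ih (a + 1) (fun l hl => hb l (hl.trans hop.le)),
        show -(a + 1) - (n : ℤ) = -a - n - 1 by ring, sp_transpose hn, hop.sp_eq hn]
      have := sp_lt hn a mu'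
      rw [show n - 1 - (n - 1 - sp n a mu') = sp n a mu' by omega]
      ring
    · rw [HW_succ_of_not hn, up_apply_of_not hop, mul_zero, add_zero]
      rintro ⟨mu', h⟩
      have := h.transpose
      rw [YoungDiagram.transpose_transpose, show -(-a - (n : ℤ) - 1) - n - 1 = a by ring] at this
      exact hop ⟨_, this⟩

theorem end_apply_eq_sum (f : Module.End A (YoungDiagram →₀ A)) (g : YoungDiagram →₀ A)
    (nu : YoungDiagram) {F : Finset YoungDiagram} (hF : g.support ⊆ F) :
    f g nu = ∑ mu ∈ F, g mu * f (Finsupp.single mu 1) nu := by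
  have : g = ∑ mu ∈ F, Finsupp.single mu (g mu) := by
    conv_lhs => rw [← Finsupp.sum_single g]
    exact Finsupp.sum_of_support_subset _ hF _ (by simp)
  conv_lhs => rw [this, map_sum, Finsupp.finsetSum_apply]
  refine Finset.sum_congr rfl fun mu _ => ?_
  rw [end_single, Finsupp.smul_apply, smul_eq_mul]

/-- The weight of the horizontal strip `lam / mu`: each ribbon of spin `s` contributes `x q^s`. -/
noncomputable def hw (n : ℕ) (q x : A) (mu lam : YoungDiagram) : A :=
  HW n (fun s => x * q ^ s) (fun _ => True) mu lam

/-- The weight of the vertical strip `lam / mu`: each ribbon of spin `s` contributes `y q^s`; the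
spin of the conjugate ribbon is `n - 1 - s`. -/
noncomputable def vw (n : ℕ) (q y : A) (mu lam : YoungDiagram) : A :=
  HW n (fun s => y * q ^ (n - 1 - s)) (fun _ => True) mu.transpose lam.transpose

/-- The commutation relation between horizontal and vertical strips: adding a vertical strip and
then removing a horizontal one amounts, up to the factor `∏_{j < n} (1 + q^(2j) x y)`, to removing a
horizontal strip and then adding a vertical one. -/
theorem local_identity (hn : 1 ≤ n) (q x y : A) (lam nu : YoungDiagram) :
    ∃ F0 : Finset YoungDiagram, ∀ F, F0 ⊆ F →
      ∑ mu ∈ F, vw n q y lam mu * hw n q x nu mu =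
        Ef q x y n * ∑ sig ∈ F, hw n q x sig lam * vw n q y sig nu := by
  obtain ⟨L1, hL1⟩ := exists_bounded lam
  obtain ⟨L2, hL2⟩ := exists_bounded nu
  obtain ⟨L, hlam, hnu⟩ : ∃ L, Bounded L lam ∧ Bounded L nu :=
    ⟨max L1 L2, hL1.mono (le_max_left _ _), hL2.mono (le_max_right _ _)⟩
  have hL0 := hlam.1
  set a : ℤ := -L - n with ha
  obtain ⟨m, hm⟩ : ∃ m : ℕ, a + m = L := ⟨(L - a).toNat, by omega⟩
  have key := congrArg (fun f => f (Finsupp.single lam 1) nu) (Dop_Vop hn q x y a m)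
  simp only [Module.End.mul_apply] at key
  have w1 : win n (a + m) lam = 0 := by
    have := win_cast n (a + m) lam
    rw [hlam.2.1 _ (by omega), hlam.2.1 _ (by omega)] at this
    omega
  have w2 : win n a nu = n := by
    have := win_cast n a nu
    rw [hnu.2.2 _ (by omega), hnu.2.2 _ (by omega)] at this
    omega
  rw [Ed_single, w1, Ed_apply, w2, show Ef q x y 0 = 1 by simp [Ef], mul_one] at key
  refine ⟨(Vop n q y a m (Finsupp.single lam 1)).support ∪
    (Dop n q x a m (Finsupp.single lam 1)).support, fun F hF => ?_⟩
  rw [end_apply_eq_sum (Dop n q x a m) _ nu (Finset.subset_union_left.trans hF),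
    end_apply_eq_sum (Vop n q y a m) _ nu (Finset.subset_union_right.trans hF),
    mul_comm _ (Ef q x y n)] at key
  have e1 : ∀ mu, vw n q y lam mu * hw n q x nu mu =
      Vop n q y a m (Finsupp.single lam 1) mu * Dop n q x a m (Finsupp.single mu 1) nu := by
    intro mu
    rw [coefV hn, coefD hn]
    · by_cases hex : (∃ T, HT n nu mu T) ∧ ∃ T, HT n lam.transpose mu.transpose T
      · obtain ⟨⟨T, hT⟩, T', hT'⟩ := hex
        -- outside a window fixed by `lam` and `nu`, the boundary of `mu` agrees with theirs
        have hr : ∀ c, L + n ≤ c → bd mu c = 0 := by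
          intro c hc
          have := hT'.bd_eq hn hlam.transpose (c := -c) (by omega)
          rw [bd_transpose, bd_transpose, neg_neg, hlam.2.1 c (by omega)] at this
          omega
        have hl : ∀ c, L + n ≤ c → bd mu.transpose c = 0 := by
          intro c hc
          have := hT.bd_eq hn hnu (c := -c) (by omega)
          rw [bd_transpose, this, hnu.2.2 (-c) (by omega)]
          omega
        congr 1
        · apply HW_congr
          intro T1 hT1
          refine iff_of_true (by simp) fun R hR => ?_
          have := hT1.tl_lt hn hl hR
          omega
        · apply HW_congr
          intro T1 hT1
          refine iff_of_true (by simp) fun R hR => ?_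
          have := hT1.tl_lt hn hr hR
          omega
      · rw [not_and_or] at hex
        rcases hex with hex | hex
        · rw [hw, HW_zero fun T hT => absurd ⟨T, hT⟩ hex, HW_zero fun T hT => absurd ⟨T, hT⟩ hex,
            mul_zero, mul_zero]
        · rw [vw, HW_zero fun T hT => absurd ⟨T, hT⟩ hex, HW_zero fun T hT => absurd ⟨T, hT⟩ hex,
            zero_mul, zero_mul]
    · intro lam' _
      refine HW_base hn fun T hT R hR => ?_
      have := hT.tl_ge hn hnu hR
      omega
    · intro mu' _
      rw [HW_base hn]
      · simp only [transpose_inj]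
      · intro T hT R hR
        have := hT.tl_ge hn hlam.transpose hR
        omega
  have e2 : ∀ sig, hw n q x sig lam * vw n q y sig nu =
      Dop n q x a m (Finsupp.single lam 1) sig * Vop n q y a m (Finsupp.single sig 1) nu := by
    intro sig
    rw [coefV hn, coefD hn]
    · congr 1
      · apply HW_congr
        intro T1 hT1
        refine iff_of_true (by simp) fun R hR => ?_
        have := hT1.tl_lt hn hlam.2.1 hR
        omega
      · apply HW_congr
        intro T1 hT1
        refine iff_of_true (by simp) fun R hR => ?_
        have := hT1.tl_lt hn hnu.transpose.2.1 hR
        omega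
    · intro lam' hle
      refine HW_base hn fun T hT R hR => ?_
      have := hT.tl_ge' hn (hlam.of_le hle) hR
      omega
    · intro mu' hle
      rw [HW_base hn]
      · simp only [transpose_inj]
      · intro T hT R hR
        have := hT.tl_ge' hn (hnu.of_le hle).transpose hR
        omega
  simp only [e1, e2]
  exact key

end

/-! ### Extracting the degree in the vertical strips -/

section

variable {R : Type*} [CommRing R] {n : ℕ}

theorem map_HW {B : Type*} [CommRing B] (hn : 1 ≤ n) (f : R →+* B) (w : ℕ → R) (P : ℤ → Prop)
    (mu lam : YoungDiagram) : HW n (fun s => f (w s)) P mu lam = f (HW n w P mu lam) := by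
  by_cases h : ∃ T, HT n mu lam T ∧ ∀ R ∈ T, P (tl n R)
  · obtain ⟨T, h1, h2⟩ := h
    rw [HW_eq hn h1 h2, HW_eq hn h1 h2, map_prod]
  · rw [HW_zero fun T h1 h2 => h ⟨T, h1, h2⟩, HW_zero fun T h1 h2 => h ⟨T, h1, h2⟩, map_zero]

theorem hw_C (hn : 1 ≤ n) (q x : R) (mu lam : YoungDiagram) :
    hw n (Polynomial.C q) (Polynomial.C x) mu lam = Polynomial.C (hw n q x mu lam) := by
  rw [hw, hw, ← map_HW hn]
  simp only [map_mul, map_pow]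

theorem hw_eq (hn : 1 ≤ n) (q x : R) {mu lam : YoungDiagram} {T : Finset (Finset Cell)}
    (h : HT n mu lam T) : hw n q x mu lam = q ^ tilingSpin T * x ^ T.card := by
  rw [hw, HW_eq hn h (by simp), Finset.prod_mul_distrib, Finset.prod_const,
    Finset.prod_pow_eq_pow_sum, mul_comm]
  rfl

theorem exists_of_hw_ne_zero {q x : R} {mu lam : YoungDiagram} (h : hw n q x mu lam ≠ 0) :
    ∃ T, HT n mu lam T := by
  obtain ⟨T, hT, -⟩ := exists_of_HW_ne_zero h
  exact ⟨T, hT⟩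

theorem card_le_of_le {mu lam : YoungDiagram} (h : mu ≤ lam) : mu.card ≤ lam.card :=
  Finset.card_le_card h

/-- The weight of the vertical strip `lam / mu` if it has `k` ribbons, and `0` otherwise. -/
noncomputable def vk (n : ℕ) (q : R) (k : ℕ) (mu lam : YoungDiagram) : R :=
  (vw n (Polynomial.C q) Polynomial.X mu lam).coeff k

theorem vk_eq (hn : 1 ≤ n) (q : R) (k : ℕ) {mu lam : YoungDiagram} {T : Finset (Finset Cell)}
    (h : HT n mu.transpose lam.transpose T) :
    vk n q k mu lam = if k = T.card then q ^ (∑ R ∈ T, (n - 1 - ribbonSpin R)) else 0 := by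
  rw [vk, vw, HW_eq hn h (by simp), Finset.prod_mul_distrib, Finset.prod_const,
    Finset.prod_pow_eq_pow_sum, ← map_pow, mul_comm, Polynomial.coeff_C_mul_X_pow]

theorem exists_of_vk_ne_zero (hn : 1 ≤ n) {q : R} {k : ℕ} {mu lam : YoungDiagram}
    (h : vk n q k mu lam ≠ 0) :
    ∃ T, HT n mu.transpose lam.transpose T ∧ T.card = k := by
  have h0 : vw n (Polynomial.C q) Polynomial.X mu lam ≠ 0 := by
    intro e
    rw [vk, e] at h
    simp at h
  obtain ⟨T, hT, -⟩ := exists_of_HW_ne_zero h0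
  rw [vk_eq hn q k hT] at h
  exact ⟨T, hT, by_contra fun hne => h (if_neg fun e => hne e.symm)⟩

theorem card_of_vk_ne_zero (hn : 1 ≤ n) {q : R} {k : ℕ} {mu lam : YoungDiagram}
    (h : vk n q k mu lam ≠ 0) : lam.card = mu.card + n * k := by
  obtain ⟨T, hT, rfl⟩ := exists_of_vk_ne_zero hn h
  have := hT.card
  rwa [card_transpose, card_transpose] at this

end

theorem finite_card_le (M : ℕ) : {lam : YoungDiagram | lam.card ≤ M}.Finite := by
  have hinj : Function.Injective YoungDiagram.cells := fun _ _ h => YoungDiagram.ext h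
  refine ((Finset.finite_toSet (Finset.range M ×ˢ Finset.range M).powerset).preimage
    hinj.injOn).subset ?_
  intro lam hlam
  simp only [Set.mem_preimage, Finset.mem_coe, Finset.mem_powerset]
  rintro ⟨i, j⟩ hij
  have hlam : lam.card ≤ M := hlam
  have h1 : (Finset.range (i + 1)).image (fun a => (a, 0)) ⊆ lam.cells := by
    intro x hx
    obtain ⟨a, ha, rfl⟩ := Finset.mem_image.1 hx
    exact lam.up_left_mem (by have := Finset.mem_range.1 ha; omega) (Nat.zero_le j) hij
  have h2 : (Finset.range (j + 1)).image (fun a => (0, a)) ⊆ lam.cells := by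
    intro x hx
    obtain ⟨a, ha, rfl⟩ := Finset.mem_image.1 hx
    exact lam.up_left_mem (Nat.zero_le i) (by have := Finset.mem_range.1 ha; omega) hij
  have h1 := Finset.card_le_card h1
  have h2 := Finset.card_le_card h2
  rw [Finset.card_image_of_injective _ (fun a b h => (Prod.mk.inj h).1), Finset.card_range] at h1
  rw [Finset.card_image_of_injective _ (fun a b h => (Prod.mk.inj h).2), Finset.card_range] at h2
  simp only [YoungDiagram.card] at hlam
  simp only [Finset.mem_product, Finset.mem_range]
  omega

/-- The finite set of Young diagrams with at most `M` cells. -/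
noncomputable def small (M : ℕ) : Finset YoungDiagram := (finite_card_le M).toFinset

theorem mem_small {M : ℕ} {lam : YoungDiagram} : lam ∈ small M ↔ lam.card ≤ M := by
  simp [small]

section

variable {R : Type*} [CommRing R] {n : ℕ}

/-- The coefficient of `y ^ k` in the commutation relation between strips. -/
theorem local_identity_coeff (hn : 1 ≤ n) (q x : R) (lam nu : YoungDiagram) (k M : ℕ)
    (hM : lam.card + n * k ≤ M) :
    ∑ mu ∈ small M, vk n q k lam mu * hw n q x nu mu =
      ∑ ij ∈ Finset.HasAntidiagonal.antidiagonal k,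
        (Ef (Polynomial.C q) (Polynomial.C x) Polynomial.X n).coeff ij.1 *
          ∑ sig ∈ small M, hw n q x sig lam * vk n q ij.2 sig nu := by
  obtain ⟨F0, hF0⟩ :=
    local_identity hn (Polynomial.C q) (Polynomial.C x) Polynomial.X lam nu
  have key := congrArg (fun f => f.coeff k) (hF0 (F0 ∪ small M) Finset.subset_union_left)
  simp only [hw_C hn, Polynomial.finsetSum_coeff, Polynomial.coeff_mul_C] at key
  rw [Polynomial.coeff_mul] at key
  simp only [Polynomial.finsetSum_coeff, Polynomial.coeff_C_mul] at key
  rw [← Finset.sum_subset (s₁ := small M) Finset.subset_union_right] at key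
  · refine Eq.trans rfl (key.trans ?_)
    refine Finset.sum_congr rfl fun ij _ => ?_
    congr 1
    rw [← Finset.sum_subset (s₁ := small M) Finset.subset_union_right]
    · rfl
    · intro sig _ hs
      by_contra hne
      obtain ⟨T, hT⟩ := exists_of_hw_ne_zero (left_ne_zero_of_mul hne)
      have := card_le_of_le hT.1
      rw [mem_small] at hs
      omega
  · intro mu _ hs
    by_contra hne
    have := card_of_vk_ne_zero hn (left_ne_zero_of_mul hne)
    rw [mem_small] at hs
    omega

/-! ### Ribbon functions by transfer matrices -/

/-- The ribbon function of shape `lam / kap`, evaluated at elements `x i` of a ring, computed by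
removing the horizontal strips one after another. -/
noncomputable def gg (n : ℕ) (q : R) (kap : YoungDiagram) : (N : ℕ) → (Fin N → R) →
    YoungDiagram → R
  | 0, _, lam => if lam = kap then 1 else 0
  | N + 1, x, lam => ∑ rho ∈ small lam.card, hw n q (x (Fin.last N)) rho lam *
      gg n q kap N (fun i => x i.castSucc) rho

theorem gg_succ (q : R) (kap : YoungDiagram) (N : ℕ) (x : Fin (N + 1) → R) {lam : YoungDiagram}
    {M : ℕ} (hM : lam ∈ small M) :
    gg n q kap (N + 1) x lam = ∑ rho ∈ small M, hw n q (x (Fin.last N)) rho lam *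
      gg n q kap N (fun i => x i.castSucc) rho := by
  rw [gg]
  apply Finset.sum_subset
  · intro rho h
    rw [mem_small] at *
    omega
  · intro rho _ h
    by_contra hne
    obtain ⟨T, hT⟩ := exists_of_hw_ne_zero (left_ne_zero_of_mul hne)
    exact h (mem_small.2 (card_le_of_le hT.1))

/-- The Pieri rule for the transfer matrix form of the ribbon functions over a core `kap`. -/
theorem pieri_gg (hn : 1 ≤ n) (q : R) {kap : YoungDiagram} (hk : ∀ p mu, ¬ Hop n p mu kap)
    (N : ℕ) (x : Fin N → R) (lam : YoungDiagram) (k M : ℕ) (hM : lam.card + n * k ≤ M) :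
    ∑ mu ∈ small M, vk n q k lam mu * gg n q kap N x mu =
      (∏ i, Ef (Polynomial.C q) (Polynomial.C (x i)) Polynomial.X n).coeff k *
        gg n q kap N x lam := by
  induction N generalizing lam k with
  | zero =>
    have h1 : ∑ mu ∈ small M, vk n q k lam mu * gg n q kap 0 x mu = vk n q k lam kap := by
      simp only [gg, mul_ite, mul_one, mul_zero, Finset.sum_ite_eq']
      split_ifs with h
      · rfl
      · by_contra hne
        have := card_of_vk_ne_zero hn (Ne.symm hne)
        rw [mem_small] at h
        omega
    rw [h1, Finset.univ_eq_empty, Finset.prod_empty, Polynomial.coeff_one, gg]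
    by_cases hl : lam = kap
    · subst hl
      rw [vk_eq hn q k (HT_empty n _)]
      simp
    · rw [if_neg hl, mul_zero]
      by_contra hne
      obtain ⟨T, hT, -⟩ := exists_of_vk_ne_zero hn hne
      rcases hT.cases hn with ⟨-, e⟩ | ⟨p, lam', T', hop, -⟩
      · exact hl (transpose_inj.1 e).symm
      · have := hop.transpose
        rw [YoungDiagram.transpose_transpose] at this
        exact hk _ _ this
  | succ N ih =>
    rw [Fin.prod_univ_castSucc, mul_comm (∏ i : Fin N, _), Polynomial.coeff_mul,
      gg_succ q kap N x (M := M) (mem_small.2 (by omega))]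
    calc ∑ mu ∈ small M, vk n q k lam mu * gg n q kap (N + 1) x mu
        = ∑ mu ∈ small M, vk n q k lam mu * ∑ nu ∈ small M, hw n q (x (Fin.last N)) nu mu *
            gg n q kap N (fun i => x i.castSucc) nu :=
          Finset.sum_congr rfl fun mu hmu => by rw [gg_succ q kap N x hmu]
      _ = ∑ nu ∈ small M, (∑ mu ∈ small M, vk n q k lam mu * hw n q (x (Fin.last N)) nu mu) *
            gg n q kap N (fun i => x i.castSucc) nu := by
          simp only [Finset.mul_sum, Finset.sum_mul]
          rw [Finset.sum_comm]
          simp only [mul_assoc]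
      _ = ∑ ij ∈ Finset.HasAntidiagonal.antidiagonal k,
            (Ef (Polynomial.C q) (Polynomial.C (x (Fin.last N))) Polynomial.X n).coeff ij.1 *
            ∑ sig ∈ small M, hw n q (x (Fin.last N)) sig lam *
              ∑ nu ∈ small M, vk n q ij.2 sig nu * gg n q kap N (fun i => x i.castSucc) nu := by
          simp only [local_identity_coeff hn q _ lam _ k M hM, Finset.mul_sum, Finset.sum_mul]
          rw [Finset.sum_comm]
          refine Finset.sum_congr rfl fun ij _ => ?_
          rw [Finset.sum_comm]
          simp only [mul_assoc]
      _ = _ := by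
          rw [Finset.sum_mul]
          refine Finset.sum_congr rfl fun ij hij => ?_
          rw [mul_assoc, Finset.mul_sum (small M) _ (Polynomial.coeff _ ij.2)]
          congr 1
          refine Finset.sum_congr rfl fun sig _ => ?_
          by_cases h0 : hw n q (x (Fin.last N)) sig lam = 0
          · rw [h0, zero_mul, zero_mul, mul_zero]
          · obtain ⟨T, hT⟩ := exists_of_hw_ne_zero h0
            have h1 := card_le_of_le hT.1
            have h2 : ij.2 ≤ k := by
              have := Finset.HasAntidiagonal.mem_antidiagonal.1 hij; omega
            have h3 := Nat.mul_le_mul_left n h2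
            rw [ih (fun i => x i.castSucc) sig ij.2 (by omega)]
            ring

theorem gg_eq_sum (q : R) (kap : YoungDiagram) (N : ℕ) (x : Fin N → R) {M : ℕ}
    (lam : {l // l ∈ small M}) :
    gg n q kap N x lam = ∑ c : Fin (N + 1) → {l // l ∈ small M},
      if (c 0 : YoungDiagram) = kap ∧ c (Fin.last N) = lam then
        ∏ i : Fin N, hw n q (x i) (c i.castSucc) (c i.succ) else 0 := by
  induction N generalizing lam with
  | zero =>
    rw [gg, ← (Equiv.funUnique (Fin 1) {l // l ∈ small M}).symm.sum_comp]
    simp only [Equiv.funUnique_symm_apply, Fin.last_zero, uniqueElim_const,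
      Finset.univ_eq_empty, Finset.prod_empty]
    rw [Finset.sum_eq_single lam]
    · simp
    · intro b _ hb
      rw [if_neg]
      exact fun h => hb h.2
    · simp
  | succ N ih =>
    rw [gg_succ q kap N x lam.2, ← Finset.sum_coe_sort (small M),
      ← (Fin.snocEquiv (fun _ => {l // l ∈ small M})).sum_comp, Fintype.sum_prod_type]
    refine Eq.trans ?_ (Finset.sum_eq_single lam ?_ ?_).symm
    · simp only [ih, Finset.mul_sum]
      rw [Finset.sum_comm]
      refine Finset.sum_congr rfl fun c _ => ?_
      refine (Finset.sum_eq_single (c (Fin.last N)) ?_ ?_).trans ?_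
      rotate_left 2
      · simp only [Fin.snocEquiv, Equiv.coe_fn_mk, Fin.prod_univ_castSucc, Fin.snoc_last,
          ← Fin.castSucc_zero, Fin.snoc_castSucc, Fin.succ_last, and_true, Fin.succ_castSucc]
        split_ifs
        · ring
        · ring
      · intro b _ hb
        rw [if_neg, mul_zero]
        exact fun h => hb h.2.symm
      · simp
    · intro b _ hb
      refine Finset.sum_eq_zero fun c _ => ?_
      rw [if_neg]
      simp only [Fin.snocEquiv, Equiv.coe_fn_mk, Fin.snoc_last]
      exact fun h => hb h.2
    · simp

theorem chain_le {N : ℕ} {lam mu : YoungDiagram} (T : RibbonTableau n N lam mu)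
    (i : Fin (N + 1)) : T.chain i ≤ lam := by
  have := Fin.monotone_iff_le_succ.2 T.chain_mono (Fin.le_last i)
  exact this.trans T.chain_last.le

theorem tableau_HT (hn : 1 ≤ n) {N : ℕ} {lam mu : YoungDiagram} (T : RibbonTableau n N lam mu)
    (i : Fin N) : HT n (T.chain i.castSucc) (T.chain i.succ) (T.tiling i) :=
  (HT_iff hn (T.chain_mono i)).2 (T.tiling_strip i)

theorem chain_injective (hn : 1 ≤ n) {N : ℕ} {lam mu : YoungDiagram}
    (T T' : RibbonTableau n N lam mu) (h : T.chain = T'.chain) : T = T' := by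
  have ht : T.tiling = T'.tiling := by
    funext i
    have h1 := tableau_HT hn T i
    rw [h] at h1
    exact h1.unique hn (tableau_HT hn T' i)
  cases T
  cases T'
  subst h ht
  rfl

/-- The sum over ribbon tableaux is a product of transfer matrices of horizontal strips. -/
theorem ribbonFn_eq_gg (hn : 1 ≤ n) (N : ℕ) (lam kap : YoungDiagram) :
    ribbonFn n N lam kap =
      gg n (MvPolynomial.C (Polynomial.X : Polynomial ℤ)) kap N MvPolynomial.X lam := by
  have hmem : ∀ (T : RibbonTableau n N lam kap) (i : Fin (N + 1)),
      T.chain i ∈ small lam.card := fun T i => mem_small.2 (card_le_of_le (chain_le T i))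
  let Φ : RibbonTableau n N lam kap → Fin (N + 1) → {l // l ∈ small lam.card} :=
    fun T i => ⟨T.chain i, hmem T i⟩
  have hinj : Function.Injective Φ := by
    intro T T' h
    apply chain_injective hn
    funext i
    exact congrArg Subtype.val (congrFun h i)
  have := Fintype.ofInjective Φ hinj
  rw [ribbonFn, finsum_eq_sum_of_fintype,
    gg_eq_sum _ kap N _ (⟨lam, mem_small.2 le_rfl⟩ : {l // l ∈ small lam.card})]
  refine Finset.sum_of_injOn Φ hinj.injOn (by simp) ?_ ?_
  · intro c _ hc
    by_contra hne
    rw [ite_eq_right_iff, Classical.not_imp] at hne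
    obtain ⟨⟨h0, hl⟩, hne⟩ := hne
    rw [← ne_eq, Finset.prod_ne_zero_iff] at hne
    choose U hU using fun i : Fin N => exists_of_hw_ne_zero (hne i (Finset.mem_univ i))
    apply hc
    refine ⟨⟨fun i => c i, h0, congrArg Subtype.val hl, fun i => (hU i).1, U,
      fun i => (HT_iff hn (hU i).1).1 (hU i)⟩, by simp, rfl⟩
  · intro T _
    rw [if_pos ⟨T.chain_zero, Subtype.ext T.chain_last⟩]
    simp only [Φ, hw_eq hn _ _ (tableau_HT hn T _)]
    rw [Finset.prod_mul_distrib, Finset.prod_pow_eq_pow_sum, ← map_pow]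
    rfl

end

/-! ### Cores -/

section

variable {n : ℕ}

theorem ribbonStep_iff (hn : 1 ≤ n) {lam mu : YoungDiagram} :
    RibbonStep n lam mu ↔ ∃ p, Hop n p mu lam := by
  constructor
  · rintro ⟨hle, h⟩
    obtain ⟨p, rho, hr⟩ := exists_isRib hn h
    refine ⟨p, fun c => ?_⟩
    have key : ∀ i, bd mu c ≤ i → i < bd lam c → p + 1 ≤ c ∧ c ≤ p + n ∧ i = bd rho c := by
      intro i h1 h2
      have b1 := bd_nonneg mu c
      have b2 := neg_le_bd mu c
      exact (hr.cell_mem_iff (by omega) (by omega)).1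
        ((mem_sdiff_iff' lam mu i c (by omega) (by omega)).2 ⟨h2, h1⟩)
    have hle := le_iff_bd.1 hle c
    split_ifs with hc
    · have := (mem_sdiff_iff' lam mu _ c (bd_nonneg _ _) (neg_le_bd _ _)).1
        (hr.cell_mem hc.1 hc.2)
      have k1 := key (bd mu c) le_rfl (by omega)
      have k2 := key (bd lam c - 1) (by omega) (by omega)
      omega
    · by_contra hne
      have := key (bd mu c) le_rfl (by omega)
      omega
  · rintro ⟨p, h⟩
    exact ⟨h.le, h.isRibbon⟩

theorem hop_card {p : ℤ} {mu lam : YoungDiagram} (h : Hop n p mu lam) :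
    lam.card = mu.card + n := by
  have h1 := h.isRib.card
  have h2 : mu.cells ⊆ lam.cells := h.le
  rw [Finset.card_sdiff_of_subset h2] at h1
  have := Finset.card_le_card h2
  simp only [YoungDiagram.card]
  omega

theorem exists_core (hn : 1 ≤ n) (lam : YoungDiagram) : ∃ d, IsNCoreOf n d lam := by
  induction hc : lam.card using Nat.strong_induction_on generalizing lam with
  | _ m ih =>
    by_cases h : ∃ mu, RibbonStep n lam mu
    · obtain ⟨mu, h⟩ := h
      obtain ⟨p, hop⟩ := (ribbonStep_iff hn).1 h
      obtain ⟨d, h1, h2⟩ := ih mu.card (by have := hop_card hop; omega) mu rfl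
      exact ⟨d, h1.head h, h2⟩
    · exact ⟨lam, .refl, fun mu hmu => h ⟨mu, hmu⟩⟩

/-- Removals of two different ribbons commute, so the core is unique. -/
theorem core_unique (hn : 1 ≤ n) {lam d d' : YoungDiagram} (h : IsNCoreOf n d lam)
    (h' : IsNCoreOf n d' lam) : d = d' := by
  have hcr : Relation.Join (Relation.ReflTransGen (RibbonStep n)) d d' := by
    refine Relation.church_rosser ?_ h.1 h'.1
    intro a b c hab hac
    obtain ⟨p, hp⟩ := (ribbonStep_iff hn).1 hab
    obtain ⟨p', hp'⟩ := (ribbonStep_iff hn).1 hac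
    by_cases he : p = p'
    · subst he
      obtain rfl := hp.left_unique hp'
      exact ⟨b, .refl, .refl⟩
    · obtain ⟨rho, h1, h2⟩ := (hop_square hn he).2 ⟨a, hp, hp'⟩
      exact ⟨rho, .single ((ribbonStep_iff hn).2 ⟨_, h1⟩),
        .single ((ribbonStep_iff hn).2 ⟨_, h2⟩)⟩
  have irr : ∀ {a b : YoungDiagram}, (∀ mu, ¬ RibbonStep n a mu) →
      Relation.ReflTransGen (RibbonStep n) a b → a = b := by
    intro a b ha hab
    rcases Relation.ReflTransGen.cases_head hab with e | ⟨c, hc, -⟩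
    · exact e
    · exact absurd hc (ha c)
  obtain ⟨e, h1, h2⟩ := hcr
  rw [irr h.2 h1, irr h'.2 h2]

theorem nCore_spec (hn : 1 ≤ n) (lam : YoungDiagram) : IsNCoreOf n (nCore n lam) lam := by
  rw [nCore, dif_pos (exists_core hn lam)]
  exact (exists_core hn lam).choose_spec

theorem nCore_eq (hn : 1 ≤ n) {lam mu : YoungDiagram}
    (h : Relation.ReflTransGen (RibbonStep n) mu lam) : nCore n mu = nCore n lam :=
  core_unique hn (nCore_spec hn mu) ⟨h.trans (nCore_spec hn lam).1, (nCore_spec hn lam).2⟩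

theorem HT.reach (hn : 1 ≤ n) {mu lam : YoungDiagram} {T : Finset (Finset Cell)}
    (h : HT n mu lam T) : Relation.ReflTransGen (RibbonStep n) lam mu := by
  induction hc : T.card generalizing lam T with
  | zero =>
    rw [Finset.card_eq_zero] at hc
    subst hc
    rw [h.eq_of_empty]
  | succ k ih =>
    rcases h.cases hn with ⟨rfl, -⟩ | ⟨p, lam1, T1, hop, h1, h2, rfl, h4, -⟩
    · simp at hc
    · rw [Finset.card_insert_of_notMem h4] at hc
      exact (ih h1 (by omega)).head ((ribbonStep_iff hn).2 ⟨p, hop⟩)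

theorem nCore_vstrip (hn : 1 ≤ n) {mu lam : YoungDiagram} {T : Finset (Finset Cell)}
    (h : HT n lam.transpose mu.transpose T) : nCore n mu = nCore n lam := by
  apply nCore_eq hn
  have this : Relation.ReflTransGen (RibbonStep n) mu.transpose.transpose
      lam.transpose.transpose := (h.reach hn).lift (p := RibbonStep n) YoungDiagram.transpose (fun a b hab => by
    obtain ⟨p, hp⟩ := (ribbonStep_iff hn).1 hab
    exact (ribbonStep_iff hn).2 ⟨_, hp.transpose⟩)
  rwa [YoungDiagram.transpose_transpose, YoungDiagram.transpose_transpose] at this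

/-! ### Spins of vertical strips and elementary symmetric polynomials -/

/-- Conjugating a ribbon of spin `s` gives one of spin `n - 1 - s`, so the spin of a vertical strip
is read off from the tiling of its conjugate. -/
theorem vStripSpin_eq (hn : 1 ≤ n) {mu lam : YoungDiagram} {T : Finset (Finset Cell)}
    (h : HT n lam.transpose mu.transpose T) :
    vStripSpin n (mu.cells \ lam.cells) = ∑ R ∈ T, (n - 1 - ribbonSpin R) := by
  have hle := h.1
  have hs : IsHStripTiling n (swapCells (mu.cells \ lam.cells)) T := by
    rw [swapCells_sdiff]
    exact (HT_iff hn hle).1 h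
  have hex : ∃ T, IsHStripTiling n (swapCells (mu.cells \ lam.cells)) T := ⟨T, hs⟩
  have hspin : stripSpin n (swapCells (mu.cells \ lam.cells)) = tilingSpin T := by
    have huniq : ∀ T', IsHStripTiling n (swapCells (mu.cells \ lam.cells)) T' → T' = T := by
      intro T' hT'
      rw [swapCells_sdiff] at hT'
      exact ((HT_iff hn hle).2 hT').unique hn h
    rw [stripSpin, dif_pos hex, huniq _ hex.choose_spec]
  have hcard : (mu.cells \ lam.cells).card / n = T.card := by
    have h1 := h.card
    rw [card_transpose, card_transpose] at h1
    have h2 : lam.cells ⊆ mu.cells := transpose_le_iff.1 hle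
    simp only [YoungDiagram.card] at h1
    rw [Finset.card_sdiff_of_subset h2, h1, Nat.add_sub_cancel_left]
    exact Nat.mul_div_cancel_left _ (by omega)
  have hsum : ∑ R ∈ T, (n - 1 - ribbonSpin R) + ∑ R ∈ T, ribbonSpin R = T.card * (n - 1) := by
    rw [← Finset.sum_add_distrib, Finset.sum_congr rfl (g := fun _ => n - 1)]
    · simp
    · intro R hR
      obtain ⟨rho, hr⟩ := h.rib hn hR
      have := sp_lt hn (tl n R) rho
      rw [hr.spin hn]
      omega
  rw [vStripSpin, hspin, hcard, tilingSpin]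
  omega

theorem coeff_prod_one_add {ι R : Type*} [Fintype ι] [DecidableEq ι] [CommRing R] (k : ℕ)
    (v : ι → R) :
    (∏ i, (1 + Polynomial.C (v i) * Polynomial.X)).coeff k = ePoly k v := by
  rw [Finset.prod_one_add, Polynomial.finsetSum_coeff, ePoly, Finset.powersetCard_eq_filter,
    Finset.sum_filter]
  refine Finset.sum_congr rfl fun s _ => ?_
  rw [Finset.prod_mul_distrib, Finset.prod_const, ← map_prod, Polynomial.coeff_C_mul_X_pow]
  exact if_congr eq_comm rfl rfl

/-- Generating function of the elementary symmetric polynomials in the alphabet `A_q(x)`. -/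
theorem ePoly_alphabet (n k N : ℕ) :
    ePoly k (alphabetVal n N) =
      (∏ i : Fin N, Ef (Polynomial.C (MvPolynomial.C (Polynomial.X : Polynomial ℤ)))
        (Polynomial.C (MvPolynomial.X i)) Polynomial.X n).coeff k := by
  rw [← coeff_prod_one_add, Fintype.prod_prod_type]
  congr 1
  refine Finset.prod_congr rfl fun i _ => ?_
  rw [Ef, ← Fin.prod_univ_eq_prod_range
    (fun j => 1 + Polynomial.C (MvPolynomial.C (Polynomial.X : Polynomial ℤ)) ^ (2 * j) *
      Polynomial.C (MvPolynomial.X i) * Polynomial.X) n]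
  refine Finset.prod_congr rfl fun j _ => ?_
  simp only [alphabetVal, map_mul, map_pow]

end

end RibbonPieri

/-- the ribbon Pieri rule, elementary version. -/
theorem ribbon_pieri_e (n k N : ℕ) (hn : 1 ≤ n) (hk : 1 ≤ k) (hN : 1 ≤ N)
    (lam : YoungDiagram) :
    ePoly k (alphabetVal n N) * G n N lam =
      ∑ᶠ mu ∈ {mu : YoungDiagram | lam ≤ mu ∧ IsVStripCells n (mu.cells \ lam.cells) ∧
          mu.card = lam.card + n * k},
        MvPolynomial.C ((Polynomial.X : Polynomial ℤ) ^ vStripSpin n (mu.cells \ lam.cells)) *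
          G n N mu := by
  set kap := nCore n lam with hkap
  have hcore : ∀ p mu, ¬ RibbonPieri.Hop n p mu kap := fun p mu h =>
    (RibbonPieri.nCore_spec hn lam).2 mu ((RibbonPieri.ribbonStep_iff hn).2 ⟨p, h⟩)
  have key := RibbonPieri.pieri_gg hn (MvPolynomial.C (Polynomial.X : Polynomial ℤ)) hcore N
    MvPolynomial.X lam k (lam.card + n * k) le_rfl
  rw [← RibbonPieri.ePoly_alphabet, ← RibbonPieri.ribbonFn_eq_gg hn] at key
  rw [G, ← key]
  have hterm : ∀ mu : YoungDiagram,
      (∑ᶠ (_ : mu ∈ {mu : YoungDiagram | lam ≤ mu ∧ IsVStripCells n (mu.cells \ lam.cells) ∧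
          mu.card = lam.card + n * k}),
        MvPolynomial.C ((Polynomial.X : Polynomial ℤ) ^ vStripSpin n (mu.cells \ lam.cells)) *
          G n N mu) =
      RibbonPieri.vk n (MvPolynomial.C (Polynomial.X : Polynomial ℤ)) k lam mu *
        RibbonPieri.gg n (MvPolynomial.C (Polynomial.X : Polynomial ℤ)) kap N
          MvPolynomial.X mu := by
    intro mu
    rw [finsum_eq_if]
    split_ifs with h
    · obtain ⟨hle, ⟨-, T, hT⟩, hcard⟩ := h
      rw [RibbonPieri.swapCells_sdiff] at hT
      have hT := (RibbonPieri.HT_iff hn (RibbonPieri.transpose_le_iff.2 hle)).2 hT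
      have hk' : k = T.card := by
        have := hT.card
        rw [RibbonPieri.card_transpose, RibbonPieri.card_transpose] at this
        exact Nat.eq_of_mul_eq_mul_left hn (by omega)
      rw [RibbonPieri.vk_eq hn _ k hT, if_pos hk', RibbonPieri.vStripSpin_eq hn hT, G,
        RibbonPieri.nCore_vstrip hn hT, RibbonPieri.ribbonFn_eq_gg hn, map_pow]
    · by_contra hne
      obtain ⟨T, hT, hc⟩ :=
        RibbonPieri.exists_of_vk_ne_zero hn (left_ne_zero_of_mul (Ne.symm hne))
      have hle := RibbonPieri.transpose_le_iff.1 hT.1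
      refine h ⟨hle, ⟨⟨mu.transpose, lam.transpose, hT.1, RibbonPieri.swapCells_sdiff _ _⟩, T, ?_⟩,
        RibbonPieri.card_of_vk_ne_zero hn (left_ne_zero_of_mul (Ne.symm hne))⟩
      rw [RibbonPieri.swapCells_sdiff]
      exact (RibbonPieri.HT_iff hn hT.1).1 hT
  rw [finsum_congr hterm]
  symm
  apply finsum_eq_sum_of_support_subset
  intro mu hmu
  have := RibbonPieri.card_of_vk_ne_zero hn (left_ne_zero_of_mul hmu)
  exact RibbonPieri.mem_small.2 this.le
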